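/- Let (X_i)_{i∈ℤ} be a stationary ergodic process over a finite alphabet 𝕏 with entropy rate h. For any ε > 0 and any sequence of sample sizes n(k) ≥ 2^{k(h+ε)}, almost surely liminf_{k→∞} H(k, X_1^{n(k)})/k = h. -/

import Mathlib

open MeasureTheory Filter Real

variable {𝕏 : Type*} [Fintype 𝕏] [Nonempty 𝕏] [DecidableEq 𝕏]
  [MeasurableSpace 𝕏] [MeasurableSingletonClass 𝕏]

/-- The left shift on two-sided sequences: `(shift ω) i = ω (i + 1)`. -/
def shift (ω : ℤ → 𝕏) : ℤ → 𝕏 := fun i => ω (i + 1)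

/-- The block `X_{s+1}^{s+l}` of a sequence `ω`, as a tuple in `𝕏^l`. -/
def blk (s l : ℕ) (ω : ℤ → 𝕏) : Fin l → 𝕏 := fun i => ω ((s : ℤ) + 1 + (i : ℤ))

/-- Shannon entropy (base 2) of a distribution `p` on a finite set:
`H(p) = -∑_{w : p w > 0} p w * log₂ (p w)` (`logb 2 0 = 0`, so zero-mass
points contribute nothing). -/
noncomputable def Hent {A : Type*} [Fintype A] (p : A → ℝ) : ℝ :=
  -∑ w, p w * Real.logb 2 (p w)

/-- Empirical nonoverlapping-block distribution
`p_k(w, x_1^n) = ⌊n/k⌋⁻¹ ∑_{i=1}^{⌊n/k⌋} 1[x_{(i-1)k+1}^{ik} = w]`. -/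
noncomputable def empDist (k n : ℕ) (ω : ℤ → 𝕏) : (Fin k → 𝕏) → ℝ :=
  fun w => (∑ i ∈ Finset.range (n / k), if blk (i * k) k ω = w then (1 : ℝ) else 0) / (n / k : ℕ)

/-- Plug-in estimator `H(k, x_1^n)` of the block entropy. -/
noncomputable def plugIn (k n : ℕ) (ω : ℤ → 𝕏) : ℝ := Hent (empDist k n ω)

/-- True block distribution `p_k(w) = P(X_1^k = w)`. -/
noncomputable def pblock (μ : Measure (ℤ → 𝕏)) (k : ℕ) : (Fin k → 𝕏) → ℝ :=
  fun w => (μ {ω | blk 0 k ω = w}).toReal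

/-- Block entropy `H(k) = H(p_k)`. -/
noncomputable def Hblock (μ : Measure (ℤ → 𝕏)) (k : ℕ) : ℝ := Hent (pblock μ k)

/-- Number `D(k, x_1^n)` of distinct nonoverlapping `k`-blocks in `x_1^n`. -/
noncomputable def Dcount (k n : ℕ) (ω : ℤ → 𝕏) : ℕ :=
  Set.ncard {w : Fin k → 𝕏 | ∃ i < n / k, blk (i * k) k ω = w}

/-- Length bound `K(k, x_1^n)` of the modified `k`-block code:
`K(k,x_1^n) = 2 log₂ k + (n/k)(H(k,x_1^n) + 2) + 3 k log₂|𝕏| (D(k,x_1^n) + 1)`. -/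
noncomputable def Kcode (k n : ℕ) (ω : ℤ → 𝕏) : ℝ :=
  2 * Real.logb 2 k + ((n : ℝ) / k) * (plugIn k n ω + 2)
    + 3 * k * Real.logb 2 (Fintype.card 𝕏) * (Dcount k n ω + 1)

/-- Conditional probability `P(X_1^k = w | ℐ)` given the shift-invariant
σ-algebra `ℐ`, as a function of the sample point. -/
noncomputable def condP (μ : Measure (ℤ → 𝕏)) (k : ℕ) (w : Fin k → 𝕏) : (ℤ → 𝕏) → ℝ :=
  μ[Set.indicator {ω | blk 0 k ω = w} (fun _ => (1 : ℝ)) | MeasurableSpace.invariants shift]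

/-- Conditional block entropy `H(X_1^k | ℐ) = E[-log₂ P(X_1^k = w | ℐ)|_{w = X_1^k}]`. -/
noncomputable def condH (μ : Measure (ℤ → 𝕏)) (k : ℕ) : ℝ :=
  ∫ ω, -Real.logb 2 (condP μ k (blk 0 k ω) ω) ∂μ

/-- `σ(y) = min(2^y, 1)`. -/
noncomputable def sigmaFn (y : ℝ) : ℝ := min ((2 : ℝ) ^ y) 1

/-- Negative part `x⁻ = -x · 1[x < 0]`. -/
noncomputable def nPart (x : ℝ) : ℝ := if x < 0 then -x else 0

/-!
The empirical block distribution is an unbiased estimator of the block distribution, and entropy is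
concave, so Jensen's inequality gives `E H(k, X_1^n) ≤ H(k)`. By Fatou's lemma it then suffices to
show that almost surely `liminf H(k, X_1^{n(k)}) / k ≥ h`.

That bound comes from a code for the `N = ⌊n(k)/k⌋` blocks of the sample. Let `h < a < h + ε` and
consider codebooks of `D = ⌈2^{ka}⌉` words. Some codebook reproduces the frequencies of all words of
empirical probability at least `1/D`, up to a factor `2`; the other words are coded through a Markov
approximation of the process, which by the ergodic theorem rarely needs more than `ka` bits. Mixing
over all codebooks costs `D k log₂ |𝕏| = o(N k)` bits, so that a single code describes the sample
in `N (H(k, X_1^{n(k)}) + 2) + o(N k)` bits. By Barron's lemma and the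
Shannon–McMillan–Breiman theorem, a code almost surely needs at least `h - δ` bits per letter from
some `k` on, whence the bound.
-/

section ErgodicAverages

variable {Ω : Type*} {T : Ω → Ω} {g φ : Ω → ℝ}

/-- The maximal function `x ↦ max_{1 ≤ m ≤ n + 1} ∑_{j < m} g (T^j x)` of the maximal ergodic
theorem, encoded by the recursion `M_{n+1} = g + max 0 (M_n ∘ T)` on which its proof rests. -/
noncomputable def birkhoffMax (T : Ω → Ω) (g : Ω → ℝ) : ℕ → Ω → ℝ
  | 0 => g
  | n + 1 => fun x => g x + max 0 (birkhoffMax T g n (T x))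

theorem birkhoffMax_succ (T : Ω → Ω) (g : Ω → ℝ) (n : ℕ) (x : Ω) :
    birkhoffMax T g (n + 1) x = g x + max 0 (birkhoffMax T g n (T x)) := rfl

theorem le_birkhoffMax (T : Ω → Ω) (g : Ω → ℝ) (n : ℕ) (x : Ω) : g x ≤ birkhoffMax T g n x := by
  cases n <;> simp [birkhoffMax]

theorem monotone_birkhoffMax (T : Ω → Ω) (g : Ω → ℝ) (x : Ω) :
    Monotone fun n => birkhoffMax T g n x := by
  refine monotone_nat_of_le_succ fun n => ?_
  induction n generalizing x with
  | zero => simp [birkhoffMax]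
  | succ n ih =>
    rw [birkhoffMax_succ, birkhoffMax_succ T g (n + 1)]
    gcongr
    exact ih (T x)

theorem birkhoffSum_succ_le_birkhoffMax (T : Ω → Ω) (g : Ω → ℝ) (n : ℕ) (x : Ω) :
    birkhoffSum T g (n + 1) x ≤ birkhoffMax T g n x := by
  induction n generalizing x with
  | zero => simp [birkhoffMax]
  | succ n ih =>
    rw [birkhoffSum_succ', birkhoffMax_succ]
    gcongr
    exact (ih (T x)).trans (le_max_right _ _)

theorem bddAbove_range_birkhoffMax_comp_iff (x : Ω) :
    BddAbove (Set.range fun n => birkhoffMax T g n (T x)) ↔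
      BddAbove (Set.range fun n => birkhoffMax T g n x) := by
  simp only [bddAbove_def, Set.forall_mem_range]
  constructor
  · rintro ⟨C, hC⟩
    refine ⟨g x + max 0 C, fun n => (monotone_birkhoffMax T g x n.le_succ).trans ?_⟩
    exact add_le_add_right (max_le_max_left 0 (hC n)) (g x)
  · rintro ⟨C, hC⟩
    refine ⟨C - g x, fun n => ?_⟩
    linarith [hC (n + 1), birkhoffMax_succ T g n x, le_max_right 0 (birkhoffMax T g n (T x))]

theorem birkhoffSum_mul (T : Ω → Ω) (g : Ω → ℝ) (N k : ℕ) (x : Ω) :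
    birkhoffSum T g (N * k) x = ∑ i ∈ Finset.range N, birkhoffSum T g k (T^[i * k] x) := by
  induction N with
  | zero => simp
  | succ N ih => rw [Nat.succ_mul, birkhoffSum_add, ih, Finset.sum_range_succ]

theorem birkhoffSum_comm (T : Ω → Ω) (g : Ω → ℝ) (k L : ℕ) (x : Ω) :
    birkhoffSum T (birkhoffSum T g k) L x = birkhoffSum T (birkhoffSum T g L) k x := by
  simp only [birkhoffSum, ← Function.iterate_add_apply]
  rw [Finset.sum_comm]
  simp only [add_comm]

theorem birkhoffSum_le_mul {B : ℝ} (hB : ∀ x, g x ≤ B) (n : ℕ) (x : Ω) :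
    birkhoffSum T g n x ≤ n * B := by
  simpa [birkhoffSum] using Finset.sum_le_card_nsmul (Finset.range n) (fun j => g (T^[j] x)) B
    fun j _ => hB _

theorem birkhoffSum_nonneg (h0 : ∀ x, 0 ≤ g x) (n : ℕ) (x : Ω) : 0 ≤ birkhoffSum T g n x :=
  Finset.sum_nonneg fun _ _ => h0 _

theorem birkhoffSum_le_birkhoffSum_birkhoffAverage_add {B : ℝ} (h0 : ∀ x, 0 ≤ g x)
    (hB : ∀ x, g x ≤ B) {L : ℕ} (hL : 0 < L) (k : ℕ) (x : Ω) :
    birkhoffSum T g k x ≤ birkhoffSum T (birkhoffAverage ℝ T g L) k x + L * B := by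
  have hshift : ∀ l ∈ Finset.range L,
      birkhoffSum T g k x - L * B ≤ birkhoffSum T g k (T^[l] x) := by
    intro l hl
    have hend : birkhoffSum T g l x ≤ L * B := (birkhoffSum_le_mul hB l x).trans <| by
      have hB0 : 0 ≤ B := (h0 x).trans (hB x)
      have hlL : (l : ℝ) ≤ L := by exact_mod_cast (Finset.mem_range.1 hl).le
      gcongr
    have hsplit : birkhoffSum T g k x + birkhoffSum T g l (T^[k] x) =
        birkhoffSum T g l x + birkhoffSum T g k (T^[l] x) := by
      rw [← birkhoffSum_add, ← birkhoffSum_add, add_comm]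
    linarith [birkhoffSum_nonneg (T := T) h0 l (T^[k] x)]
  have hsum : L * (birkhoffSum T g k x - L * B) ≤ birkhoffSum T (birkhoffSum T g L) k x := by
    rw [← birkhoffSum_comm]
    simpa [birkhoffSum] using Finset.card_nsmul_le_sum _ _ _ hshift
  have hL' : (0 : ℝ) < L := by exact_mod_cast hL
  have havg : birkhoffSum T (birkhoffAverage ℝ T g L) k x =
      (L : ℝ)⁻¹ * birkhoffSum T (birkhoffSum T g L) k x := by
    simp only [birkhoffSum, birkhoffAverage, smul_eq_mul, Finset.mul_sum]
  rw [havg, inv_mul_eq_div, ← sub_le_iff_le_add, le_div_iff₀ hL']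
  linarith

/-- The amount by which the ergodic average of `φ` over `L` steps exceeds the level `c`. -/
noncomputable def averageExcess (T : Ω → Ω) (φ : Ω → ℝ) (c : ℝ) (L : ℕ) (x : Ω) : ℝ :=
  max 0 (birkhoffAverage ℝ T φ L x - c)

theorem averageExcess_nonneg (T : Ω → Ω) (φ : Ω → ℝ) (c : ℝ) (L : ℕ) (x : Ω) :
    0 ≤ averageExcess T φ c L x := le_max_left _ _

theorem averageExcess_le {B : ℝ} (h0 : ∀ x, 0 ≤ φ x) (hB : ∀ x, φ x ≤ B) (c : ℝ) (L : ℕ) (x : Ω) :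
    averageExcess T φ c L x ≤ B + |c| := by
  have hB0 : 0 ≤ B := (h0 x).trans (hB x)
  have havg : birkhoffAverage ℝ T φ L x ≤ B := by
    rw [birkhoffAverage, smul_eq_mul, inv_mul_eq_div]
    refine div_le_of_le_mul₀ L.cast_nonneg hB0 ?_
    rw [mul_comm]
    exact birkhoffSum_le_mul hB L x
  exact max_le (by positivity) (by linarith [neg_abs_le c])

theorem birkhoffSum_averageExcess_ge {B : ℝ} (h0 : ∀ x, 0 ≤ φ x) (hB : ∀ x, φ x ≤ B) {L : ℕ}
    (hL : 0 < L) (c : ℝ) (k : ℕ) (x : Ω) :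
    birkhoffSum T φ k x - k * c - L * B ≤ birkhoffSum T (averageExcess T φ c L) k x := by
  have hle : birkhoffSum T (birkhoffAverage ℝ T φ L) k x - k * c ≤
      birkhoffSum T (averageExcess T φ c L) k x := by
    simpa [birkhoffSum, averageExcess] using Finset.sum_le_sum fun j (_ : j ∈ Finset.range k) =>
      le_max_right 0 (birkhoffAverage ℝ T φ L (T^[j] x) - c)
  linarith [birkhoffSum_le_birkhoffSum_birkhoffAverage_add (T := T) h0 hB hL k x]

theorem tendsto_iInf_nat_add {a : ℕ → ℝ} {l : ℝ} (ha : Tendsto a atTop (nhds l))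
    (hbdd : BddBelow (Set.range a)) : Tendsto (fun M => ⨅ j, a (M + j)) atTop (nhds l) := by
  refine tendsto_order.2 ⟨fun b hb => ?_, fun b hb => ?_⟩
  · obtain ⟨b', hbb', hb'⟩ := exists_between hb
    obtain ⟨M₀, hM₀⟩ := eventually_atTop.1 (ha.eventually (lt_mem_nhds hb'))
    filter_upwards [eventually_ge_atTop M₀] with M hM
    exact hbb'.trans_le (le_ciInf fun j => (hM₀ (M + j) (by omega)).le)
  · filter_upwards [ha.eventually (gt_mem_nhds hb)] with M hM
    exact (ciInf_le (hbdd.mono (Set.range_comp_subset_range (M + ·) a)) 0).trans_lt hM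

theorem iInf_nat_add_le {u : ℕ → Ω → ℝ} (h0 : ∀ j x, 0 ≤ u j x) {M j : ℕ} (hj : M ≤ j) (x : Ω) :
    ⨅ i, u (M + i) x ≤ u j x := by
  obtain ⟨i, rfl⟩ := Nat.exists_eq_add_of_le hj
  exact ciInf_le ⟨0, Set.forall_mem_range.2 fun i => h0 (M + i) x⟩ i

variable [MeasurableSpace Ω] {μ : Measure Ω}

theorem integrable_birkhoffMax (hT : MeasurePreserving T μ μ) (hg : Integrable g μ) (n : ℕ) :
    Integrable (birkhoffMax T g n) μ := by
  induction n with
  | zero => exact hg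
  | succ n ih =>
    refine (hg.add (hT.integrable_comp_of_integrable ih).pos_part).congr (.of_forall fun x => ?_)
    simp [birkhoffMax, max_comm]

theorem integral_comp_measurePreserving (hT : MeasurePreserving T μ μ) (hg : Integrable g μ) :
    ∫ x, g (T x) ∂μ = ∫ x, g x ∂μ := by
  have h := integral_map hT.aemeasurable (hT.map_eq.symm ▸ hg.aestronglyMeasurable)
  rwa [hT.map_eq, eq_comm] at h

theorem integral_sub_min_birkhoffMax_nonneg (hT : MeasurePreserving T μ μ)
    (hg : Integrable g μ) (n : ℕ) :
    0 ≤ ∫ x, (g x - min 0 (birkhoffMax T g n (T x))) ∂μ := by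
  have hM := integrable_birkhoffMax hT hg
  have hMT : Integrable (fun x => birkhoffMax T g n (T x)) μ :=
    hT.integrable_comp_of_integrable (hM n)
  calc 0 ≤ ∫ x, birkhoffMax T g (n + 1) x ∂μ - ∫ x, birkhoffMax T g n x ∂μ :=
        sub_nonneg.2 (integral_mono (hM n) (hM (n + 1))
          fun x => monotone_birkhoffMax T g x n.le_succ)
    _ = ∫ x, (birkhoffMax T g (n + 1) x - birkhoffMax T g n (T x)) ∂μ := by
        rw [integral_sub (hM _) hMT, integral_comp_measurePreserving hT (hM n)]
    _ = ∫ x, (g x - min 0 (birkhoffMax T g n (T x))) ∂μ := by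
        congr with x
        linarith [birkhoffMax_succ T g n x, min_add_max 0 (birkhoffMax T g n (T x))]

theorem nullMeasurableSet_bddAbove_birkhoffMax (hT : MeasurePreserving T μ μ)
    (hg : Integrable g μ) :
    NullMeasurableSet {x | BddAbove (Set.range fun n => birkhoffMax T g n x)} μ := by
  have hM n : AEMeasurable (birkhoffMax T g n) μ := (integrable_birkhoffMax hT hg n).aemeasurable
  refine (measurableSet_bddAbove_range fun n =>
    (hM n).measurable_mk).nullMeasurableSet.congr ?_
  filter_upwards [ae_all_iff.2 fun n => (hM n).ae_eq_mk] with x hx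
  change BddAbove _ = BddAbove _
  simp only [hx]

/-- On the set where the maximal functions are unbounded, `g - min 0 (M_n ∘ T)` tends to `g`;
if that set had full measure, the integral of `g` would be nonnegative. -/
theorem ae_bddAbove_birkhoffMax (hT : Ergodic T μ) (hg : Integrable g μ)
    (hneg : ∫ x, g x ∂μ < 0) :
    ∀ᵐ x ∂μ, BddAbove (Set.range fun n => birkhoffMax T g n x) := by
  have hT' := hT.toMeasurePreserving
  refine (hT.quasiErgodic.ae_mem_or_ae_notMem₀ (nullMeasurableSet_bddAbove_birkhoffMax hT' hg)
    (.of_forall fun x => propext (bddAbove_range_birkhoffMax_comp_iff x))).resolve_right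
    fun hunb => hneg.not_ge ?_
  refine ge_of_tendsto' (tendsto_integral_of_dominated_convergence
    (fun x => |g x| + |g (T x)|) (fun n => ?_) ?_ (fun n => ?_) ?_)
    (integral_sub_min_birkhoffMax_nonneg hT' hg)
  · have hM := hT'.integrable_comp_of_integrable (integrable_birkhoffMax hT' hg n)
    exact hg.aestronglyMeasurable.sub
      (aestronglyMeasurable_const.inf hM.aestronglyMeasurable)
  · exact hg.abs.add (hT'.integrable_comp_of_integrable hg.abs)
  · refine .of_forall fun x => (norm_sub_le _ _).trans ?_
    simp only [Real.norm_eq_abs]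
    refine add_le_add_right ?_ _
    have hlow : -|g (T x)| ≤ min 0 (birkhoffMax T g n (T x)) := le_min
      (neg_nonpos.2 (abs_nonneg _)) ((neg_abs_le _).trans (le_birkhoffMax T g n (T x)))
    exact abs_le.2 ⟨hlow, (min_le_left _ _).trans (abs_nonneg _)⟩
  · filter_upwards [hunb] with x hx
    change ¬ BddAbove _ at hx
    rw [← bddAbove_range_birkhoffMax_comp_iff, not_bddAbove_iff] at hx
    obtain ⟨-, ⟨n₀, rfl⟩, hn₀⟩ := hx 0
    refine tendsto_const_nhds.congr' ?_
    filter_upwards [eventually_ge_atTop n₀] with n hn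
    rw [min_eq_left (hn₀.le.trans (monotone_birkhoffMax T g (T x) hn)), sub_zero]

theorem eventually_le_natCast_mul (C : ℝ) {d : ℝ} (hd : 0 < d) : ∀ᶠ n : ℕ in atTop, C ≤ n * d :=
  (tendsto_natCast_atTop_atTop.atTop_mul_const hd).eventually_ge_atTop C

theorem integrable_of_measurable_of_nonneg_of_le [IsFiniteMeasure μ] {B : ℝ} (hφ : Measurable φ)
    (h0 : ∀ x, 0 ≤ φ x) (hB : ∀ x, φ x ≤ B) : Integrable φ μ :=
  Integrable.of_bound hφ.aestronglyMeasurable B <| .of_forall fun x => by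
    rw [Real.norm_eq_abs, abs_of_nonneg (h0 x)]
    exact hB x

variable [IsProbabilityMeasure μ] {c : ℝ}

theorem ae_eventually_birkhoffSum_le (hT : Ergodic T μ) (hg : Integrable g μ)
    (hc : ∫ x, g x ∂μ < c) : ∀ᵐ x ∂μ, ∀ᶠ n : ℕ in atTop, birkhoffSum T g n x ≤ n * c := by
  obtain ⟨d, hgd, hdc⟩ := exists_between hc
  have hneg : ∫ x, (g x - d) ∂μ < 0 := by
    rw [integral_sub hg (integrable_const d)]
    simpa using hgd
  filter_upwards [ae_bddAbove_birkhoffMax hT (hg.sub (integrable_const d)) hneg] with x ⟨C, hC⟩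
  filter_upwards [eventually_le_natCast_mul C (sub_pos.2 hdc), eventually_ge_atTop 1] with n hn h1
  obtain ⟨m, rfl⟩ := Nat.exists_eq_add_of_le' h1
  have hmax : birkhoffSum T (fun x => g x - d) (m + 1) x ≤ C :=
    (birkhoffSum_succ_le_birkhoffMax _ _ m x).trans (hC ⟨m, rfl⟩)
  have hsub : birkhoffSum T (fun x => g x - d) (m + 1) x =
      birkhoffSum T g (m + 1) x - (m + 1 : ℕ) * d := by
    simp [birkhoffSum, Finset.sum_sub_distrib]
  linarith

theorem ae_eventually_le_birkhoffSum (hT : Ergodic T μ) (hg : Integrable g μ)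
    (hc : c < ∫ x, g x ∂μ) : ∀ᵐ x ∂μ, ∀ᶠ n : ℕ in atTop, n * c ≤ birkhoffSum T g n x := by
  have hneg : ∫ x, (-g) x ∂μ < -c := by
    simpa only [Pi.neg_apply, integral_neg, neg_lt_neg_iff] using hc
  filter_upwards [ae_eventually_birkhoffSum_le hT hg.neg hneg] with x hx
  filter_upwards [hx] with n hn
  rw [birkhoffSum_neg, mul_neg, neg_le_neg_iff] at hn
  exact hn

theorem measurable_averageExcess (hT : Measurable T) (hφ : Measurable φ) (c : ℝ) (L : ℕ) :
    Measurable (averageExcess T φ c L) := by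
  have hsum : Measurable (birkhoffSum T φ L) :=
    Finset.measurable_sum _ fun j _ => hφ.comp (hT.iterate j)
  exact measurable_const.max ((hsum.const_smul (L : ℝ)⁻¹).sub_const c)

theorem tendsto_integral_averageExcess {B : ℝ} (hT : Ergodic T μ) (hφ : Measurable φ)
    (h0 : ∀ x, 0 ≤ φ x) (hB : ∀ x, φ x ≤ B) (hc : ∫ x, φ x ∂μ < c) :
    Tendsto (fun L => ∫ x, averageExcess T φ c L x ∂μ) atTop (nhds 0) := by
  rw [← integral_zero Ω ℝ (μ := μ)]
  refine tendsto_integral_of_dominated_convergence (fun _ => B + |c|)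
    (fun L => (measurable_averageExcess hT.measurable hφ c L).aestronglyMeasurable)
    (integrable_const _) (fun L => .of_forall fun x => ?_) ?_
  · rw [Real.norm_eq_abs, abs_of_nonneg (averageExcess_nonneg _ _ _ _ _)]
    exact averageExcess_le h0 hB c L x
  · filter_upwards [ae_eventually_birkhoffSum_le hT
      (integrable_of_measurable_of_nonneg_of_le hφ h0 hB) hc] with x hx
    refine tendsto_const_nhds.congr' ?_
    filter_upwards [hx, eventually_gt_atTop 0] with L hL hL0
    have hL' : (0 : ℝ) < L := by exact_mod_cast hL0
    have havg : birkhoffAverage ℝ T φ L x ≤ c := by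
      rwa [birkhoffAverage, smul_eq_mul, inv_mul_eq_div, div_le_iff₀' hL']
    rw [averageExcess, max_eq_left (sub_nonpos.2 havg)]

/-- The ergodic theorem is applied to `averageExcess` for one large `L`, which makes the bound
uniform in the number of blocks. -/
theorem ae_eventually_forall_sum_blockExcess_le {B δ : ℝ} (hT : Ergodic T μ) (hφ : Measurable φ)
    (h0 : ∀ x, 0 ≤ φ x) (hB : ∀ x, φ x ≤ B) (hc : ∫ x, φ x ∂μ < c) (hδ : 0 < δ) :
    ∀ᵐ x ∂μ, ∀ᶠ k : ℕ in atTop, ∀ N : ℕ, 0 < N →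
      ∑ i ∈ Finset.range N, max 0 (birkhoffSum T φ k (T^[i * k] x) - k * c) ≤ (N * k : ℕ) * δ := by
  obtain ⟨d, hφd, hdc⟩ := exists_between hc
  obtain ⟨L, hLδ, hL⟩ := (((tendsto_integral_averageExcess hT hφ h0 hB hφd).eventually
    (gt_mem_nhds hδ)).and (eventually_gt_atTop 0)).exists
  have hinteg : Integrable (averageExcess T φ d L) μ :=
    integrable_of_measurable_of_nonneg_of_le (measurable_averageExcess hT.measurable hφ d L)
      (averageExcess_nonneg T φ d L) (averageExcess_le h0 hB d L)
  filter_upwards [ae_eventually_birkhoffSum_le hT hinteg hLδ] with x hx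
  obtain ⟨k₀, hk₀⟩ := eventually_atTop.1 hx
  filter_upwards [eventually_ge_atTop k₀,
    eventually_le_natCast_mul (L * B) (sub_pos.2 hdc)] with k hk hkL N hN
  refine le_trans ?_ (hk₀ (N * k) (hk.trans (Nat.le_mul_of_pos_left k hN)))
  rw [birkhoffSum_mul]
  refine Finset.sum_le_sum fun i _ =>
    max_le (birkhoffSum_nonneg (averageExcess_nonneg _ _ _ _) _ _) ?_
  linarith [birkhoffSum_averageExcess_ge (T := T) h0 hB hL d k (T^[i * k] x)]

variable {u : ℕ → Ω → ℝ} {B : ℝ}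

theorem integrable_iInf_nat_add (hu : ∀ j, Measurable (u j)) (h0 : ∀ j x, 0 ≤ u j x)
    (hB : ∀ j x, u j x ≤ B) (M : ℕ) : Integrable (fun x => ⨅ j, u (M + j) x) μ :=
  integrable_of_measurable_of_nonneg_of_le (Measurable.iInf fun _ => hu _)
    (fun x => le_ciInf fun _ => h0 _ x)
    (fun x => (iInf_nat_add_le h0 le_rfl x).trans (hB M x))

theorem tendsto_integral_sub_iInf_nat_add (hu : ∀ j, Measurable (u j)) (h0 : ∀ j x, 0 ≤ u j x)
    (hB : ∀ j x, u j x ≤ B) (hlim : ∀ᵐ x ∂μ, ∃ l, Tendsto (fun j => u j x) atTop (nhds l)) :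
    Tendsto (fun M => ∫ x, (u M x - ⨅ j, u (M + j) x) ∂μ) atTop (nhds 0) := by
  rw [← integral_zero Ω ℝ (μ := μ)]
  refine tendsto_integral_of_dominated_convergence (fun _ => B)
    (fun M => ((hu M).sub (Measurable.iInf fun j => hu _)).aestronglyMeasurable)
    (integrable_const _) (fun M => .of_forall fun x => ?_) ?_
  · have hinf : 0 ≤ ⨅ j, u (M + j) x := le_ciInf fun j => h0 _ x
    rw [Real.norm_eq_abs, abs_of_nonneg (sub_nonneg.2 (iInf_nat_add_le h0 le_rfl x))]
    linarith [hB M x]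
  · filter_upwards [hlim] with x ⟨l, hl⟩
    simpa using hl.sub (tendsto_iInf_nat_add hl ⟨0, Set.forall_mem_range.2 fun j => h0 j x⟩)

/-- Half of Breiman's (Maker's) ergodic theorem. The functions `u j` eventually dominate
`inf_{i ≥ M} u i`, whose integral is close to that of `u M`. -/
theorem ae_eventually_le_sum_iterate (hT : Ergodic T μ) (hu : ∀ j, Measurable (u j))
    (h0 : ∀ j x, 0 ≤ u j x) (hB : ∀ j x, u j x ≤ B)
    (hlim : ∀ᵐ x ∂μ, ∃ l, Tendsto (fun j => u j x) atTop (nhds l))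
    {d : ℝ} (hcd : c < d) (hd : ∃ᶠ j in atTop, d ≤ ∫ x, u j x ∂μ) :
    ∀ᵐ x ∂μ, ∀ᶠ n : ℕ in atTop, n * c ≤ ∑ j ∈ Finset.range n, u j (T^[j] x) := by
  obtain ⟨e, hce, hed⟩ := exists_between hcd
  obtain ⟨M, hdM, hM⟩ := (hd.and_eventually ((tendsto_integral_sub_iInf_nat_add hu h0 hB
    hlim).eventually (gt_mem_nhds (sub_pos.2 hed)))).exists
  have hinteg := integrable_iInf_nat_add (μ := μ) hu h0 hB M
  rw [integral_sub (integrable_of_measurable_of_nonneg_of_le (hu M) (h0 M) (hB M)) hinteg] at hM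
  filter_upwards [ae_eventually_le_birkhoffSum hT hinteg (c := e) (by linarith)] with x hx
  filter_upwards [hx, eventually_le_natCast_mul (M * B) (sub_pos.2 hce),
    eventually_ge_atTop M] with n hn hnB hMn
  have htail : ∀ j ∈ Finset.range n, ⨅ i, u (M + i) (T^[j] x) ≤
      u j (T^[j] x) + if j ∈ Finset.range M then B else 0 := by
    intro j _
    split_ifs with hj
    · linarith [iInf_nat_add_le h0 (le_refl M) (T^[j] x), hB M (T^[j] x), h0 j (T^[j] x)]
    · rw [add_zero]
      exact iInf_nat_add_le h0 (not_lt.1 (Finset.mem_range.not.1 hj)) _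
  have hsum := Finset.sum_le_sum htail
  rw [Finset.sum_add_distrib, Finset.sum_ite_mem,
    Finset.inter_eq_right.2 (Finset.range_mono hMn), Finset.sum_const, Finset.card_range,
    nsmul_eq_mul] at hsum
  change n * e ≤ ∑ j ∈ Finset.range n, ⨅ i, u (M + i) (T^[j] x) at hn
  linarith

end ErgodicAverages

section Increments

variable {H : ℕ → ℝ} {h c : ℝ}

theorem frequently_sub_lt_of_tendsto_div (hH : Tendsto (fun k => H k / k) atTop (nhds h))
    (hc : h < c) : ∃ᶠ j in atTop, H (j + 1) - H j < c := by
  intro hge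
  obtain ⟨M, hM⟩ := eventually_atTop.1 hge
  have hlin : ∀ n ≥ M, H M + (n - M) * c ≤ H n := by
    intro n hn
    induction n, hn using Nat.le_induction with
    | base => simp
    | succ n hn ih =>
      push_cast
      linarith [not_lt.1 (hM n hn)]
  obtain ⟨d, hhd, hdc⟩ := exists_between hc
  obtain ⟨n, hnd, hn, hnM, hn0⟩ := ((hH.eventually (gt_mem_nhds hhd)).and
    ((eventually_le_natCast_mul (M * c - H M) (sub_pos.2 hdc)).and
      ((eventually_ge_atTop M).and (eventually_gt_atTop 0)))).exists
  have hn0' : (0 : ℝ) < n := by exact_mod_cast hn0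
  rw [div_lt_iff₀ hn0'] at hnd
  linarith [hlin n hnM]

theorem frequently_lt_sub_of_tendsto_div (hH : Tendsto (fun k => H k / k) atTop (nhds h))
    (hc : c < h) : ∃ᶠ j in atTop, c < H (j + 1) - H j := by
  have hneg : Tendsto (fun k => (-H) k / k) atTop (nhds (-h)) := by
    simpa only [Pi.neg_apply, neg_div] using hH.neg
  refine (frequently_sub_lt_of_tendsto_div hneg (neg_lt_neg hc)).mono fun j hj => ?_
  simp only [Pi.neg_apply] at hj
  linarith

end Increments

section Windows

variable {α : Type*}

/-- The word `ω_{s+1} … ω_{s+l}`, as for `blk` but with an integer starting point. -/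
def window (s : ℤ) (l : ℕ) (ω : ℤ → α) : Fin l → α := fun i => ω (s + 1 + i)

theorem blk_eq_window (s l : ℕ) (ω : ℤ → α) : blk s l ω = window s l ω := rfl

theorem iterate_shift_apply (j : ℕ) (ω : ℤ → α) (i : ℤ) : shift^[j] ω i = ω (i + j) := by
  induction j generalizing ω with
  | zero => simp
  | succ j ih => rw [Function.iterate_succ_apply, ih, shift, Nat.cast_succ, ← add_assoc]

theorem window_iterate_shift (s : ℤ) (l j : ℕ) (ω : ℤ → α) :
    window s l (shift^[j] ω) = window (s + j) l ω := by
  ext i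
  simp only [window, iterate_shift_apply]
  congr 1
  ring

theorem window_succ (s : ℤ) (l : ℕ) (ω : ℤ → α) :
    window s (l + 1) ω = Fin.snoc (window s l ω) (ω (s + 1 + l)) := by
  ext i
  refine Fin.lastCases ?_ (fun i => ?_) i <;> simp [window]

theorem init_window (s : ℤ) (l : ℕ) (ω : ℤ → α) :
    Fin.init (window s (l + 1) ω) = window s l ω := by
  rw [window_succ, Fin.init_snoc]

theorem tail_window (s : ℤ) (l : ℕ) (ω : ℤ → α) :
    Fin.tail (window s (l + 1) ω) = window (s + 1) l ω := by
  ext i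
  simp only [Fin.tail, window, Fin.val_succ]
  congr 1
  push_cast
  ring

theorem sum_snoc [Fintype α] {l : ℕ} (F : (Fin (l + 1) → α) → ℝ) :
    ∑ v, F v = ∑ u : Fin l → α, ∑ a, F (Fin.snoc u a) := by
  rw [← (Fin.snocEquiv fun _ => α).sum_comp, Fintype.sum_prod_type_right]
  rfl

variable [MeasurableSpace α]

theorem measurable_window (s : ℤ) (l : ℕ) : Measurable (window (α := α) s l) :=
  measurable_pi_lambda _ fun _ => measurable_pi_apply _

theorem pblock_nonneg (μ : Measure (ℤ → α)) (l : ℕ) (w : Fin l → α) : 0 ≤ pblock μ l w :=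
  ENNReal.toReal_nonneg

theorem pblock_le_one (μ : Measure (ℤ → α)) [IsProbabilityMeasure μ] (l : ℕ) (w : Fin l → α) :
    pblock μ l w ≤ 1 :=
  measureReal_le_one

variable {μ : Measure (ℤ → α)}

theorem map_window (hμ : MeasurePreserving shift μ μ) (s : ℤ) (l : ℕ) :
    μ.map (window s l) = μ.map (window 0 l) := by
  have hshift : ∀ (t : ℤ) (j : ℕ), μ.map (window t l) = μ.map (window (t + j) l) := by
    intro t j
    have hwin : window (α := α) (t + j) l = window t l ∘ shift^[j] :=
      funext fun ω => (window_iterate_shift t l j ω).symm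
    rw [hwin, ← Measure.map_map (measurable_window t l) (hμ.iterate j).measurable,
      (hμ.iterate j).map_eq]
  rcases le_total 0 s with hs | hs
  · simpa [Int.toNat_of_nonneg hs] using (hshift 0 s.toNat).symm
  · simpa [Int.toNat_of_nonneg (Int.neg_nonneg.2 hs)] using hshift s (-s).toNat

theorem pblock_le_pblock_init [IsFiniteMeasure μ] {l : ℕ} (v : Fin (l + 1) → α) :
    pblock μ (l + 1) v ≤ pblock μ l (Fin.init v) :=
  measureReal_mono fun ω (hω : window 0 (l + 1) ω = v) =>
    show window 0 l ω = Fin.init v from hω ▸ (init_window 0 l ω).symm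

variable [MeasurableSingletonClass α]

theorem pblock_eq_map_window (hμ : MeasurePreserving shift μ μ) (s : ℤ) (l : ℕ) (w : Fin l → α) :
    pblock μ l w = (μ.map (window s l)).real {w} := by
  rw [map_window hμ, map_measureReal_apply (measurable_window 0 l) (measurableSet_singleton w)]
  rfl

theorem ae_forall_pblock_window_pos [Countable α] [IsFiniteMeasure μ]
    (hμ : MeasurePreserving shift μ μ) :
    ∀ᵐ ω ∂μ, ∀ (s : ℤ) (l : ℕ), 0 < pblock μ l (window s l ω) := by
  refine ae_all_iff.2 fun s => ae_all_iff.2 fun l => ?_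
  refine ae_of_ae_map (p := fun w => 0 < pblock μ l w) (measurable_window s l).aemeasurable ?_
  refine ae_iff_of_countable.2 fun w hw => ?_
  rw [pblock_eq_map_window hμ s]
  exact ENNReal.toReal_pos hw (measure_ne_top _ _)

theorem integrable_window [Finite α] [IsFiniteMeasure μ] (s : ℤ) (l : ℕ) (F : (Fin l → α) → ℝ) :
    Integrable (fun ω => F (window s l ω)) μ :=
  (Integrable.of_finite (μ := μ.map (window s l)) (f := F)).comp_measurable
    (measurable_window s l)

variable [Fintype α]

theorem integral_window [IsFiniteMeasure μ] (hμ : MeasurePreserving shift μ μ) (s : ℤ) (l : ℕ)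
    (F : (Fin l → α) → ℝ) : ∫ ω, F (window s l ω) ∂μ = ∑ w, pblock μ l w * F w := by
  rw [← integral_map (measurable_window s l).aemeasurable
    (Measurable.of_discrete (f := F)).aestronglyMeasurable, integral_fintype .of_finite]
  simp only [pblock_eq_map_window hμ s l, smul_eq_mul]

theorem setIntegral_window [IsFiniteMeasure μ] (hμ : MeasurePreserving shift μ μ) (s : ℤ) (l : ℕ)
    (S : Set (Fin l → α)) (F : (Fin l → α) → ℝ) :
    ∫ ω in window s l ⁻¹' S, F (window s l ω) ∂μ = ∑ w, pblock μ l w * S.indicator F w := by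
  rw [← integral_window hμ s l,
    ← integral_indicator (measurable_window s l S.toFinite.measurableSet)]
  rfl

theorem sum_pblock_snoc [IsFiniteMeasure μ] (hμ : MeasurePreserving shift μ μ) {l : ℕ}
    (u : Fin l → α) : ∑ a, pblock μ (l + 1) (Fin.snoc u a) = pblock μ l u := by
  classical
  have hinit := integral_window hμ 0 (l + 1) fun v => if Fin.init v = u then (1 : ℝ) else 0
  simp only [init_window] at hinit
  rw [integral_window hμ 0 l fun v => if v = u then (1 : ℝ) else 0, sum_snoc] at hinit
  simpa using hinit.symm

theorem sum_pblock [IsProbabilityMeasure μ] (hμ : MeasurePreserving shift μ μ) (l : ℕ) :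
    ∑ w, pblock μ l w = 1 := by
  simpa using (integral_window hμ 0 l fun _ => 1).symm

end Windows

section Kernels

variable {α : Type*} {m : ℕ}

/-- A strictly positive subprobability kernel from words of length `m` to the next letter,
written as a function of the word extended by that letter. -/
structure IsPosSubkernel [Fintype α] (r : (Fin (m + 1) → α) → ℝ) : Prop where
  pos : ∀ v, 0 < r v
  sum_snoc_le_one : ∀ u : Fin m → α, ∑ a, r (Fin.snoc u a) ≤ 1

theorem IsPosSubkernel.le_one [Fintype α] {r : (Fin (m + 1) → α) → ℝ} (hr : IsPosSubkernel r)
    (v : Fin (m + 1) → α) : r v ≤ 1 := by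
  refine le_trans ?_ (hr.sum_snoc_le_one (Fin.init v))
  nth_rw 1 [← Fin.snoc_init_self v]
  exact Finset.single_le_sum (f := fun a => r (Fin.snoc (Fin.init v) a))
    (fun _ _ => (hr.pos _).le) (Finset.mem_univ _)

/-- The information function `-log₂ r(ω_{1-m} … ω_0, ω_1)` of a kernel: the code length of the
letter `ω_1` given its past. -/
noncomputable def kernelInfo (r : (Fin (m + 1) → α) → ℝ) (ω : ℤ → α) : ℝ :=
  -Real.logb 2 (r (window (-m) (m + 1) ω))

theorem kernelInfo_iterate_shift (r : (Fin (m + 1) → α) → ℝ) (j : ℕ) (ω : ℤ → α) :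
    kernelInfo r (shift^[j] ω) = -Real.logb 2 (r (window (j - m) (m + 1) ω)) := by
  rw [kernelInfo, window_iterate_shift, neg_add_eq_sub]

theorem kernelInfo_nonneg [Fintype α] {r : (Fin (m + 1) → α) → ℝ} (hr : IsPosSubkernel r)
    (ω : ℤ → α) : 0 ≤ kernelInfo r ω :=
  neg_nonneg.2 (Real.logb_nonpos one_lt_two (hr.pos _).le (hr.le_one _))

theorem measurable_kernelInfo [Finite α] [MeasurableSpace α] [MeasurableSingletonClass α]
    (r : (Fin (m + 1) → α) → ℝ) : Measurable (kernelInfo r) :=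
  (Measurable.of_discrete (f := fun v => -Real.logb 2 (r v))).comp (measurable_window _ _)

variable [MeasurableSpace α] {μ : Measure (ℤ → α)}

/-- The conditional probability `P(X_{j+1} = v_{j+1} | X_1^j = v_1^j)`, equal to `0` when the
condition has probability zero. -/
noncomputable def condProb (μ : Measure (ℤ → α)) (j : ℕ) (v : Fin (j + 1) → α) : ℝ :=
  pblock μ (j + 1) v / pblock μ j (Fin.init v)

theorem condProb_nonneg (μ : Measure (ℤ → α)) (j : ℕ) (v : Fin (j + 1) → α) :
    0 ≤ condProb μ j v := div_nonneg (pblock_nonneg _ _ _) (pblock_nonneg _ _ _)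

theorem pblock_init_mul_condProb [IsFiniteMeasure μ] {j : ℕ} (v : Fin (j + 1) → α) :
    pblock μ j (Fin.init v) * condProb μ j v = pblock μ (j + 1) v := by
  refine mul_div_cancel_of_imp' fun h0 => ?_
  exact le_antisymm (h0 ▸ pblock_le_pblock_init v) (pblock_nonneg _ _ _)

theorem condProb_window_pos {ω : ℤ → α} (hω : ∀ s l, 0 < pblock μ l (window s l ω)) (s : ℤ)
    (j : ℕ) : 0 < condProb μ j (window s (j + 1) ω) := by
  rw [condProb, init_window]
  exact div_pos (hω _ _) (hω _ _)

theorem kernelInfo_condProb {ω : ℤ → α} (hω : ∀ s l, 0 < pblock μ l (window s l ω)) (j : ℕ) :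
    kernelInfo (condProb μ j) ω = Real.logb 2 (pblock μ j (window (-j) j ω)) -
      Real.logb 2 (pblock μ (j + 1) (window (-j) (j + 1) ω)) := by
  rw [kernelInfo, condProb, init_window, Real.logb_div (hω _ _).ne' (hω _ _).ne', neg_sub]

theorem pblock_zero [IsProbabilityMeasure μ] (w : Fin 0 → α) : pblock μ 0 w = 1 := by
  rw [pblock, Set.eq_univ_of_forall (s := {ω | blk 0 0 ω = w}) fun _ => Subsingleton.elim _ _,
    measure_univ, ENNReal.toReal_one]

theorem neg_logb_pblock_blk [IsProbabilityMeasure μ] {ω : ℤ → α}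
    (hω : ∀ s l, 0 < pblock μ l (window s l ω)) (n : ℕ) :
    -Real.logb 2 (pblock μ n (blk 0 n ω)) =
      ∑ j ∈ Finset.range n, kernelInfo (condProb μ j) (shift^[j] ω) := by
  rw [blk_eq_window, Nat.cast_zero]
  induction n with
  | zero => simp [pblock_zero]
  | succ n ih =>
    rw [Finset.sum_range_succ, ← ih, kernelInfo_iterate_shift, condProb, sub_self, init_window,
      Real.logb_div (hω _ _).ne' (hω _ _).ne']
    ring

variable [Fintype α] [MeasurableSingletonClass α]

theorem sum_condProb_snoc_le_one [IsFiniteMeasure μ] (hμ : MeasurePreserving shift μ μ) {j : ℕ}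
    (u : Fin j → α) : ∑ a, condProb μ j (Fin.snoc u a) ≤ 1 := by
  simp only [condProb, Fin.init_snoc]
  rw [← Finset.sum_div, sum_pblock_snoc hμ]
  exact div_self_le_one _

theorem integral_kernelInfo_condProb [IsFiniteMeasure μ] (hμ : MeasurePreserving shift μ μ)
    (j : ℕ) : ∫ ω, kernelInfo (condProb μ j) ω ∂μ = Hblock μ (j + 1) - Hblock μ j := by
  have hlog l : ∫ ω, Real.logb 2 (pblock μ l (window (-j) l ω)) ∂μ = -Hblock μ l := by
    rw [integral_window hμ _ _ fun v => Real.logb 2 (pblock μ l v), Hblock, Hent, neg_neg]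
  have hinteg l : Integrable (fun ω => Real.logb 2 (pblock μ l (window (-j) l ω))) μ :=
    integrable_window _ _ fun v => Real.logb 2 (pblock μ l v)
  rw [integral_congr_ae ((ae_forall_pblock_window_pos hμ).mono fun ω hω =>
    kernelInfo_condProb hω j), integral_sub (hinteg j) (hinteg (j + 1)), hlog, hlog]
  ring

theorem integral_div_condProb_le_one [IsProbabilityMeasure μ] (hμ : MeasurePreserving shift μ μ)
    {r : (Fin (m + 1) → α) → ℝ} (hr : IsPosSubkernel r) (s : ℤ) :
    ∫ ω, r (window s (m + 1) ω) / condProb μ m (window s (m + 1) ω) ∂μ ≤ 1 := by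
  rw [integral_window hμ s (m + 1) fun v => r v / condProb μ m v, sum_snoc, ← sum_pblock hμ m]
  refine Finset.sum_le_sum fun u _ => ?_
  calc ∑ a, pblock μ (m + 1) (Fin.snoc u a) * (r (Fin.snoc u a) / condProb μ m (Fin.snoc u a))
      ≤ ∑ a, pblock μ m u * r (Fin.snoc u a) := by
        refine Finset.sum_le_sum fun a _ => ?_
        rw [← pblock_init_mul_condProb, Fin.init_snoc, mul_assoc, mul_div_left_comm]
        refine mul_le_mul_of_nonneg_left ?_ (pblock_nonneg _ _ _)
        exact mul_le_of_le_one_right (hr.pos _).le (div_self_le_one _)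
    _ ≤ pblock μ m u := by
        rw [← Finset.mul_sum]
        exact mul_le_of_le_one_right (pblock_nonneg _ _ _) (hr.sum_snoc_le_one u)

theorem logb_two_le_add_sub_one_div_log {x y : ℝ} (hx : 0 < x) (hy : 0 < y) :
    Real.logb 2 y ≤ Real.logb 2 x + (y / x - 1) / Real.log 2 := by
  have hlog := Real.log_le_sub_one_of_pos (div_pos hy hx)
  rw [Real.log_div hy.ne' hx.ne'] at hlog
  rw [Real.logb, Real.logb, ← add_div]
  refine div_le_div_of_nonneg_right ?_ (Real.log_pos one_lt_two).le
  linarith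

/-- Gibbs' inequality, from `log (r / p) ≤ r / p - 1`. -/
theorem Hblock_succ_sub_le_integral_kernelInfo [IsProbabilityMeasure μ]
    (hμ : MeasurePreserving shift μ μ) {r : (Fin (m + 1) → α) → ℝ} (hr : IsPosSubkernel r) :
    Hblock μ (m + 1) - Hblock μ m ≤ ∫ ω, kernelInfo r ω ∂μ := by
  have hinteg (F : (Fin (m + 1) → α) → ℝ) : Integrable (fun ω => F (window (-m) (m + 1) ω)) μ :=
    integrable_window _ _ F
  have hinfo (q : (Fin (m + 1) → α) → ℝ) : Integrable (kernelInfo q) μ :=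
    hinteg fun v => -Real.logb 2 (q v)
  have hratio := ((hinteg fun v => r v / condProb μ m v).sub (integrable_const 1)).div_const
    (Real.log 2)
  have hpoint : ∀ᵐ ω ∂μ, kernelInfo (condProb μ m) ω ≤ (kernelInfo r + fun ω =>
      (r (window (-m) (m + 1) ω) / condProb μ m (window (-m) (m + 1) ω) - 1) / Real.log 2) ω := by
    filter_upwards [ae_forall_pblock_window_pos hμ] with ω hω
    have htangent := logb_two_le_add_sub_one_div_log (condProb_window_pos hω (-m) m)
      (hr.pos (window (-m) (m + 1) ω))
    simp only [kernelInfo, Pi.add_apply]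
    linarith
  have hle := integral_mono_ae (hinfo _) ((hinfo r).add hratio) hpoint
  rw [integral_kernelInfo_condProb hμ, integral_add' (hinfo r) hratio, integral_div,
    integral_sub' (hinteg fun v => r v / condProb μ m v) (integrable_const 1), integral_const,
    probReal_univ, one_smul] at hle
  have hneg := div_nonpos_of_nonpos_of_nonneg
    (sub_nonpos.2 (integral_div_condProb_le_one hμ hr (-m))) (Real.log_pos one_lt_two).le
  linarith

end Kernels

section Smoothing

variable {α : Type*} {d : ℝ}

theorem two_rpow_neg_lt_one (hd : 0 < d) : (2 : ℝ) ^ (-d) < 1 :=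
  Real.rpow_lt_one_of_one_lt_of_neg one_lt_two (neg_lt_zero.2 hd)

theorem one_sub_two_rpow_neg_div_card_pos [Fintype α] [Nonempty α] (hd : 0 < d) :
    0 < (1 - (2 : ℝ) ^ (-d)) / Fintype.card α :=
  div_pos (sub_pos.2 (two_rpow_neg_lt_one hd)) (by exact_mod_cast Fintype.card_pos)

variable [MeasurableSpace α] {μ : Measure (ℤ → α)}

/-- The conditional probabilities mixed with the uniform distribution. The mixture weight `2 ^ (-d)`
makes the mixture cost at most `d` bits per letter. -/
noncomputable def smoothProb [Fintype α] (μ : Measure (ℤ → α)) (d : ℝ) (j : ℕ)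
    (v : Fin (j + 1) → α) : ℝ :=
  2 ^ (-d) * condProb μ j v + (1 - 2 ^ (-d)) / Fintype.card α

theorem forall_pblock_window_iterate_shift_pos {ω : ℤ → α}
    (hω : ∀ s l, 0 < pblock μ l (window s l ω)) (i : ℕ) (s : ℤ) (l : ℕ) :
    0 < pblock μ l (window s l (shift^[i] ω)) := by
  rw [window_iterate_shift]
  exact hω _ _

variable [Fintype α]

theorem le_smoothProb (j : ℕ) (v : Fin (j + 1) → α) :
    (1 - 2 ^ (-d)) / Fintype.card α ≤ smoothProb μ d j v :=
  le_add_of_nonneg_left (mul_nonneg (by positivity) (condProb_nonneg μ j v))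

section Nonempty

variable [Nonempty α]

theorem isPosSubkernel_smoothProb [MeasurableSingletonClass α] [IsFiniteMeasure μ]
    (hμ : MeasurePreserving shift μ μ) (hd : 0 < d) (j : ℕ) :
    IsPosSubkernel (smoothProb μ d j) where
  pos v := (one_sub_two_rpow_neg_div_card_pos hd).trans_le (le_smoothProb j v)
  sum_snoc_le_one u := by
    have hcard : (Fintype.card α : ℝ) ≠ 0 := by exact_mod_cast Fintype.card_ne_zero
    have hsum := mul_le_of_le_one_right (a := (2 : ℝ) ^ (-d)) (by positivity)
      (sum_condProb_snoc_le_one hμ u)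
    simp only [smoothProb, Finset.sum_add_distrib, ← Finset.mul_sum, Finset.sum_const,
      Finset.card_univ, nsmul_eq_mul, mul_div_cancel₀ _ hcard]
    linarith

theorem kernelInfo_smoothProb_le (hd : 0 < d) (j : ℕ) (ω : ℤ → α) :
    kernelInfo (smoothProb μ d j) ω ≤ -Real.logb 2 ((1 - 2 ^ (-d)) / Fintype.card α) :=
  neg_le_neg (Real.logb_le_logb_of_le one_lt_two (one_sub_two_rpow_neg_div_card_pos hd)
    (le_smoothProb j _))

end Nonempty

theorem kernelInfo_smoothProb_le_add (hd : 0 < d) {ω : ℤ → α}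
    (hω : ∀ s l, 0 < pblock μ l (window s l ω)) (j : ℕ) :
    kernelInfo (smoothProb μ d j) ω ≤ d + kernelInfo (condProb μ j) ω := by
  have hp := condProb_window_pos hω (-j) j
  have h2 : (0 : ℝ) < 2 ^ (-d) := by positivity
  have hlog := Real.logb_le_logb_of_le one_lt_two (mul_pos h2 hp)
    (le_add_of_nonneg_right (a := (2 : ℝ) ^ (-d) * condProb μ j (window (-j) (j + 1) ω))
      (div_nonneg (sub_nonneg.2 (two_rpow_neg_lt_one hd).le) (Fintype.card α).cast_nonneg))
  rw [Real.logb_mul h2.ne' hp.ne', Real.logb_rpow two_pos (by norm_num)] at hlog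
  simp only [kernelInfo, smoothProb]
  linarith

theorem integral_kernelInfo_smoothProb_le [MeasurableSingletonClass α] [IsProbabilityMeasure μ]
    (hμ : MeasurePreserving shift μ μ) (hd : 0 < d) (j : ℕ) :
    ∫ ω, kernelInfo (smoothProb μ d j) ω ∂μ ≤ d + (Hblock μ (j + 1) - Hblock μ j) := by
  have hinteg (q : (Fin (j + 1) → α) → ℝ) : Integrable (kernelInfo q) μ :=
    integrable_window _ _ fun v => -Real.logb 2 (q v)
  calc ∫ ω, kernelInfo (smoothProb μ d j) ω ∂μ
      ≤ ∫ ω, (d + kernelInfo (condProb μ j) ω) ∂μ :=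
        integral_mono_ae (hinteg _) ((integrable_const d).add (hinteg _))
          ((ae_forall_pblock_window_pos hμ).mono fun ω hω => kernelInfo_smoothProb_le_add hd hω j)
    _ = d + (Hblock μ (j + 1) - Hblock μ j) := by
        rw [integral_add (integrable_const d) (hinteg _), integral_kernelInfo_condProb hμ,
          integral_const, probReal_univ, one_smul]

end Smoothing

section Past

variable {α : Type*} [MeasurableSpace α] [MeasurableSingletonClass α]

/-- The filtration of finite pasts: the `j`-th σ-algebra is generated by `ω_{1-j}, …, ω_0`. -/
def pastFiltration (α : Type*) [MeasurableSpace α] [MeasurableSingletonClass α] [Finite α] :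
    Filtration ℕ (inferInstance : MeasurableSpace (ℤ → α)) where
  seq j := MeasurableSpace.comap (window (-j) j) inferInstance
  mono' := by
    refine monotone_nat_of_le_succ fun j => ?_
    have htail : window (α := α) (-j) j = Fin.tail ∘ window (-(j + 1 : ℕ)) (j + 1) := by
      funext ω
      rw [Function.comp_apply, tail_window]
      congr 1
      push_cast
      ring
    rw [htail, ← MeasurableSpace.comap_comp]
    exact MeasurableSpace.comap_mono (Measurable.of_discrete (f := Fin.tail)).comap_le
  le' j := (measurable_window (-j) j).comap_le

variable {μ : Measure (ℤ → α)}

theorem condProb_ae_eq_condExp [Finite α] [DecidableEq α] [IsFiniteMeasure μ]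
    (hμ : MeasurePreserving shift μ μ) (j : ℕ) (a : α) :
    (fun ω => condProb μ j (Fin.snoc (window (-j) j ω) a)) =ᵐ[μ]
      μ[fun ω => if ω 1 = a then (1 : ℝ) else 0 | pastFiltration α j] := by
  cases nonempty_fintype α
  have hlast : (fun ω : ℤ → α => if ω 1 = a then (1 : ℝ) else 0) = fun ω =>
      (fun v : Fin (j + 1) → α => if v (Fin.last j) = a then (1 : ℝ) else 0)
        (window (-j) (j + 1) ω) := by
    simp [window]
  have hpast := integrable_window (μ := μ) (-j) j fun u => condProb μ j (Fin.snoc u a)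
  rw [hlast]
  refine ae_eq_condExp_of_forall_setIntegral_eq ((pastFiltration α).le j)
    (integrable_window _ _ fun v => if v (Fin.last j) = a then (1 : ℝ) else 0)
    (fun _ _ _ => hpast.integrableOn) ?_ ?_
  · rintro - ⟨S, -, rfl⟩ -
    have hinit : window (α := α) (-j) j ⁻¹' S = window (-j) (j + 1) ⁻¹' (Fin.init ⁻¹' S) := by
      rw [← Set.preimage_comp]
      exact congrArg (· ⁻¹' S) (funext fun ω => (init_window _ _ ω).symm)
    rw [setIntegral_window hμ (-j) j S fun u => condProb μ j (Fin.snoc u a), hinit,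
      setIntegral_window hμ _ _ _ fun v => if v (Fin.last j) = a then (1 : ℝ) else 0,
      sum_snoc]
    refine Finset.sum_congr rfl fun u _ => ?_
    by_cases hu : u ∈ S
    · have hsnoc := pblock_init_mul_condProb (μ := μ) (Fin.snoc u a)
      rw [Fin.init_snoc] at hsnoc
      simp [Set.indicator, hu, hsnoc]
    · simp [Set.indicator, hu]
  · have hcomap : Measurable[pastFiltration α j] (window (α := α) (-j) j) := comap_measurable _
    exact ((Measurable.of_discrete (f := fun u : Fin j → α => condProb μ j (Fin.snoc u a))).comp
      hcomap).stronglyMeasurable.aestronglyMeasurable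

theorem ae_exists_tendsto_condProb [Finite α] [IsFiniteMeasure μ]
    (hμ : MeasurePreserving shift μ μ) :
    ∀ᵐ ω ∂μ, ∃ l, Tendsto (fun j => condProb μ j (window (-j) (j + 1) ω)) atTop (nhds l) := by
  classical
  have hcond : ∀ᵐ ω ∂μ, ∀ (a : α) (j : ℕ), condProb μ j (Fin.snoc (window (-j) j ω) a) =
      (μ[fun ω => if ω 1 = a then (1 : ℝ) else 0 | pastFiltration α j]) ω :=
    ae_all_iff.2 fun a => ae_all_iff.2 fun j => condProb_ae_eq_condExp hμ j a
  have hlevy := ae_all_iff.2 fun a : α => tendsto_ae_condExp (μ := μ) (ℱ := pastFiltration α)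
    fun ω => if ω 1 = a then (1 : ℝ) else 0
  filter_upwards [hcond, hlevy] with ω hω hlim
  refine ⟨_, (hlim (ω 1)).congr fun j => ?_⟩
  rw [← hω, window_succ, neg_add_cancel_comm]

variable [Fintype α]

theorem ae_exists_tendsto_kernelInfo_smoothProb [Nonempty α] [IsFiniteMeasure μ]
    (hμ : MeasurePreserving shift μ μ) {d : ℝ} (hd : 0 < d) :
    ∀ᵐ ω ∂μ, ∃ l, Tendsto (fun j => kernelInfo (smoothProb μ d j) ω) atTop (nhds l) := by
  filter_upwards [ae_exists_tendsto_condProb hμ] with ω ⟨l, hl⟩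
  have hlim : Tendsto (fun j => smoothProb μ d j (window (-j) (j + 1) ω)) atTop
      (nhds (2 ^ (-d) * l + (1 - 2 ^ (-d)) / Fintype.card α)) :=
    (hl.const_mul _).add tendsto_const_nhds
  have hpos := (one_sub_two_rpow_neg_div_card_pos (α := α) hd).trans_le
    (ge_of_tendsto' hlim fun j => le_smoothProb j _)
  exact ⟨_, ((hlim.log hpos.ne').div_const _).neg⟩

/-- The lower half of the Shannon–McMillan–Breiman theorem. -/
theorem ae_eventually_logb_pblock_blk_le [Nonempty α] [IsProbabilityMeasure μ]
    (hμ : Ergodic shift μ) {h : ℝ} (hH : Tendsto (fun k => Hblock μ k / k) atTop (nhds h)) {c : ℝ}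
    (hc : c < h) :
    ∀ᵐ ω ∂μ, ∀ᶠ n : ℕ in atTop, Real.logb 2 (pblock μ n (blk 0 n ω)) ≤ -(n * c) := by
  have hmp := hμ.toMeasurePreserving
  obtain ⟨c', hcc', hc'⟩ := exists_between hc
  obtain ⟨e, hce, hec'⟩ := exists_between hcc'
  have hd : 0 < e - c := sub_pos.2 hce
  filter_upwards [ae_forall_pblock_window_pos hmp, ae_eventually_le_sum_iterate hμ
    (fun j => measurable_kernelInfo (smoothProb μ (e - c) j))
    (fun j => kernelInfo_nonneg (isPosSubkernel_smoothProb hmp hd j))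
    (kernelInfo_smoothProb_le hd) (ae_exists_tendsto_kernelInfo_smoothProb hmp hd) hec'
    ((frequently_lt_sub_of_tendsto_div hH hc').mono fun j hj => hj.le.trans
      (Hblock_succ_sub_le_integral_kernelInfo hmp (isPosSubkernel_smoothProb hmp hd j)))]
    with ω hω hlow
  filter_upwards [hlow] with n hn
  have hsum := Finset.sum_le_sum fun j (_ : j ∈ Finset.range n) =>
    kernelInfo_smoothProb_le_add hd (forall_pblock_window_iterate_shift_pos hω j) j
  rw [Finset.sum_add_distrib, ← neg_logb_pblock_blk hω, Finset.sum_const, Finset.card_range,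
    nsmul_eq_mul] at hsum
  linarith

end Past

section MarkovWeights

variable {α : Type*}

theorem window_congr {s : ℤ} {l : ℕ} {ω ω' : ℤ → α} (h : ∀ i, s < i → i ≤ s + l → ω i = ω' i) :
    window s l ω = window s l ω' :=
  funext fun i => h _ (by omega) (by omega)

variable [Nonempty α] {k m : ℕ}

/-- A two-sided sequence carrying the word `w` at the positions `1, …, k`, and an arbitrary letter
elsewhere. -/
noncomputable def extendWord (w : Fin k → α) (i : ℤ) : α :=
  if h : 0 < i ∧ i ≤ k then w ⟨(i - 1).toNat, by omega⟩ else Classical.arbitrary α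

theorem extendWord_snoc_of_le (u : Fin k → α) (a : α) {i : ℤ} (hi : i ≤ k) :
    extendWord (Fin.snoc u a : Fin (k + 1) → α) i = extendWord u i := by
  by_cases h0 : 0 < i
  · have hlt : (i - 1).toNat < k := by omega
    have hi' : i ≤ (k + 1 : ℕ) := by omega
    rw [extendWord, extendWord, dif_pos ⟨h0, hi'⟩, dif_pos ⟨h0, hi⟩]
    exact Fin.snoc_castSucc (α := fun _ => α) a u ⟨(i - 1).toNat, hlt⟩
  · simp [extendWord, h0]

theorem extendWord_snoc_self (u : Fin k → α) (a : α) :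
    extendWord (Fin.snoc u a : Fin (k + 1) → α) (k + 1) = a := by
  have h0 : (0 : ℤ) < k + 1 := by omega
  simp [extendWord, h0, Fin.snoc]

theorem extendWord_window {i : ℤ} (h0 : 0 < i) (hi : i ≤ k) (ω : ℤ → α) :
    extendWord (window 0 k ω) i = ω i := by
  simp [extendWord, h0, hi, window]

/-- The weight of a word under the order-`m` Markov chain with kernel `r`, started from an
arbitrary fixed past. -/
noncomputable def markovWeight (r : (Fin (m + 1) → α) → ℝ) (w : Fin k → α) : ℝ :=
  ∏ j ∈ Finset.range k, r (window (j - m) (m + 1) (extendWord w))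

theorem markovWeight_snoc (r : (Fin (m + 1) → α) → ℝ) (u : Fin k → α) (a : α) :
    markovWeight r (Fin.snoc u a : Fin (k + 1) → α) =
      markovWeight r u * r (Fin.snoc (window (k - m) m (extendWord u)) a) := by
  rw [markovWeight, Finset.prod_range_succ]
  congr 1
  · refine Finset.prod_congr rfl fun j hj => congrArg r (window_congr fun i _ hi => ?_)
    rw [Finset.mem_range] at hj
    exact extendWord_snoc_of_le u a (by omega)
  · rw [window_succ, window_congr fun i _ hi => extendWord_snoc_of_le u a (by omega),
      show (k : ℤ) - m + 1 + m = k + 1 by ring, extendWord_snoc_self]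

variable [Fintype α] {r : (Fin (m + 1) → α) → ℝ}

theorem markovWeight_pos (hr : IsPosSubkernel r) (w : Fin k → α) : 0 < markovWeight r w :=
  Finset.prod_pos fun _ _ => hr.pos _

theorem sum_markovWeight_le_one (hr : IsPosSubkernel r) (k : ℕ) :
    ∑ w : Fin k → α, markovWeight r w ≤ 1 := by
  induction k with
  | zero => simp [markovWeight]
  | succ k ih =>
    rw [sum_snoc]
    refine (Finset.sum_le_sum fun u _ => ?_).trans ih
    simp only [markovWeight_snoc, ← Finset.mul_sum]
    exact mul_le_of_le_one_right (markovWeight_pos hr u).le (hr.sum_snoc_le_one _)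

/-- Only the first `m` letters, whose past is not the true one, are charged extra. -/
theorem neg_logb_markovWeight_window_le (hr : IsPosSubkernel r) {B : ℝ}
    (hB : ∀ ω, kernelInfo r ω ≤ B) (k : ℕ) (ω : ℤ → α) :
    -Real.logb 2 (markovWeight r (window 0 k ω)) ≤
      birkhoffSum shift (kernelInfo r) k ω + m * B := by
  have hB0 : 0 ≤ B := (kernelInfo_nonneg hr ω).trans (hB ω)
  have hletter : ∀ j ∈ Finset.range k,
      -Real.logb 2 (r (window (j - m) (m + 1) (extendWord (window 0 k ω)))) ≤
        kernelInfo r (shift^[j] ω) + if j ∈ Finset.range m then B else 0 := by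
    intro j hj
    rw [Finset.mem_range] at hj
    split_ifs with hm
    · rw [← kernelInfo_iterate_shift]
      linarith [hB (shift^[j] (extendWord (window 0 k ω))), kernelInfo_nonneg hr (shift^[j] ω)]
    · rw [Finset.mem_range, not_lt] at hm
      rw [kernelInfo_iterate_shift, add_zero,
        window_congr fun i h0 hi => extendWord_window (by omega) (by omega) ω]
  calc -Real.logb 2 (markovWeight r (window 0 k ω))
      ≤ ∑ j ∈ Finset.range k,
          (kernelInfo r (shift^[j] ω) + if j ∈ Finset.range m then B else 0) := by
        rw [markovWeight, Real.logb_prod _ _ fun _ _ => (hr.pos _).ne', ← Finset.sum_neg_distrib]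
        exact Finset.sum_le_sum hletter
    _ ≤ birkhoffSum shift (kernelInfo r) k ω + m * B := by
        rw [Finset.sum_add_distrib, Finset.sum_ite_mem, Finset.sum_const, nsmul_eq_mul]
        refine add_le_add_right (mul_le_mul_of_nonneg_right ?_ hB0) _
        exact_mod_cast (Finset.card_le_card Finset.inter_subset_right).trans_eq
          (Finset.card_range m)

theorem exists_weight_ae_eventually_forall_sum_excess_le [MeasurableSpace α]
    [MeasurableSingletonClass α] {μ : Measure (ℤ → α)} [IsProbabilityMeasure μ]
    (hμ : Ergodic shift μ) {h : ℝ} (hH : Tendsto (fun k => Hblock μ k / k) atTop (nhds h))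
    {c δ : ℝ} (hc : h < c) (hδ : 0 < δ) :
    ∃ R : (k : ℕ) → (Fin k → α) → ℝ, (∀ k w, 0 < R k w) ∧ (∀ k, ∑ w, R k w ≤ 1) ∧
      ∀ᵐ ω ∂μ, ∀ᶠ k : ℕ in atTop, ∀ N : ℕ, 0 < N →
        ∑ i ∈ Finset.range N, max 0 (-Real.logb 2 (R k (blk (i * k) k ω)) - k * c) ≤
          (N * k : ℕ) * δ := by
  have hmp := hμ.toMeasurePreserving
  obtain ⟨c₂, hc₂, hcc⟩ := exists_between hc
  obtain ⟨c₁, hc₁, hcc₁⟩ := exists_between hc₂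
  have hd : 0 < c₂ - c₁ := sub_pos.2 hcc₁
  obtain ⟨m, hm⟩ := (frequently_sub_lt_of_tendsto_div hH hc₁).exists
  have hr := isPosSubkernel_smoothProb hmp hd m
  set r := smoothProb μ (c₂ - c₁) m
  have hmean : ∫ ω, kernelInfo r ω ∂μ < c₂ := by
    linarith [integral_kernelInfo_smoothProb_le hmp hd m]
  refine ⟨fun _ => markovWeight r, fun _ => markovWeight_pos hr, sum_markovWeight_le_one hr, ?_⟩
  filter_upwards [ae_eventually_forall_sum_blockExcess_le hμ (measurable_kernelInfo r)
    (kernelInfo_nonneg hr) (kernelInfo_smoothProb_le hd m) hmean hδ] with ω hω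
  filter_upwards [hω, eventually_le_natCast_mul
    (m * -Real.logb 2 ((1 - 2 ^ (-(c₂ - c₁))) / Fintype.card α)) (sub_pos.2 hcc)] with k hk hkc N hN
  refine (Finset.sum_le_sum fun i _ => max_le_max_left 0 ?_).trans (hk N hN)
  have hblock := neg_logb_markovWeight_window_le hr (kernelInfo_smoothProb_le hd m) k
    (shift^[i * k] ω)
  rw [window_iterate_shift, zero_add, ← blk_eq_window] at hblock
  linarith

end MarkovWeights

section Competition

variable {α : Type*} [Fintype α] [MeasurableSpace α] [MeasurableSingletonClass α]
  {μ : Measure (ℤ → α)} [IsProbabilityMeasure μ]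

theorem measureReal_pblock_le_mul_le (hμ : MeasurePreserving shift μ μ) {l : ℕ}
    {S : (Fin l → α) → ℝ} (hS : ∀ w, 0 ≤ S w) (hS1 : ∑ w, S w ≤ 1) {t : ℝ} (ht : 0 ≤ t) :
    μ.real {ω | pblock μ l (blk 0 l ω) ≤ t * S (blk 0 l ω)} ≤ t := by
  classical
  have hset := setIntegral_window hμ 0 l {w | pblock μ l w ≤ t * S w} 1
  simp only [Pi.one_apply, setIntegral_const, smul_eq_mul, mul_one] at hset
  change μ.real (window 0 l ⁻¹' {w | pblock μ l w ≤ t * S w}) ≤ t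
  calc μ.real (window 0 l ⁻¹' {w | pblock μ l w ≤ t * S w})
      = ∑ w, pblock μ l w * {w | pblock μ l w ≤ t * S w}.indicator 1 w := hset
    _ ≤ ∑ w, t * S w := by
        refine Finset.sum_le_sum fun w _ => ?_
        by_cases hw : pblock μ l w ≤ t * S w
        · simp [Set.indicator, hw]
        · simpa [Set.indicator, hw] using mul_nonneg ht (hS w)
    _ ≤ t := by
        rw [← Finset.mul_sum]
        exact mul_le_of_le_one_right ht hS1

/-- Barron's lemma, from Markov's inequality and the Borel–Cantelli lemma. -/
theorem ae_eventually_mul_lt_pblock (hμ : MeasurePreserving shift μ μ) {l : ℕ → ℕ}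
    (hl : ∀ᶠ k in atTop, k ≤ l k) {S : (k : ℕ) → (Fin (l k) → α) → ℝ} (hS : ∀ k w, 0 ≤ S k w)
    (hS1 : ∀ k, ∑ w, S k w ≤ 1) {e : ℝ} (he : 0 < e) :
    ∀ᵐ ω ∂μ, ∀ᶠ k in atTop,
      2 ^ (-(l k * e)) * S k (blk 0 (l k) ω) < pblock μ (l k) (blk 0 (l k) ω) := by
  let s : ℕ → Set (ℤ → α) := fun k =>
    {ω | pblock μ (l k) (blk 0 (l k) ω) ≤ 2 ^ (-(l k * e)) * S k (blk 0 (l k) ω)}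
  have hgeom : Summable fun k => ((2 : ℝ) ^ (-e)) ^ k :=
    summable_geometric_of_lt_one (by positivity) (two_rpow_neg_lt_one he)
  have hsmall : ∀ᶠ k in atTop, ‖μ.real (s k)‖ ≤ 1 * ‖((2 : ℝ) ^ (-e)) ^ k‖ := by
    filter_upwards [hl] with k hk
    rw [one_mul, Real.norm_of_nonneg measureReal_nonneg, Real.norm_of_nonneg (by positivity),
      ← Real.rpow_mul_natCast two_pos.le]
    refine (measureReal_pblock_le_mul_le hμ (hS k) (hS1 k) (by positivity)).trans ?_
    refine Real.rpow_le_rpow_of_exponent_le one_le_two ?_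
    rw [neg_mul, neg_le_neg_iff, mul_comm]
    gcongr
  have hsum : ∑' k, μ (s k) ≠ ⊤ := by
    have hsummable := summable_of_isBigO_nat hgeom (.of_bound 1 hsmall)
    simpa using hsummable.tsum_ofReal_ne_top
  filter_upwards [ae_eventually_notMem hsum] with ω hω
  filter_upwards [hω] with k hk
  exact not_le.1 hk

theorem ae_eventually_le_neg_logb_weight (hμ : Ergodic shift μ) [Nonempty α] {h : ℝ}
    (hH : Tendsto (fun k => Hblock μ k / k) atTop (nhds h)) {c : ℝ} (hc : c < h) {l : ℕ → ℕ}
    (hl : ∀ᶠ k in atTop, k ≤ l k) {S : (k : ℕ) → (Fin (l k) → α) → ℝ} (hS : ∀ k w, 0 < S k w)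
    (hS1 : ∀ k, ∑ w, S k w ≤ 1) :
    ∀ᵐ ω ∂μ, ∀ᶠ k in atTop, l k * c ≤ -Real.logb 2 (S k (blk 0 (l k) ω)) := by
  obtain ⟨d, hcd, hdh⟩ := exists_between hc
  filter_upwards [ae_eventually_logb_pblock_blk_le hμ hH hdh, ae_eventually_mul_lt_pblock
    hμ.toMeasurePreserving hl (fun k w => (hS k w).le) hS1 (sub_pos.2 hcd)] with ω hsmb hω
  have hl' : Tendsto l atTop atTop := tendsto_atTop_mono' _ hl tendsto_id
  filter_upwards [hω, hl'.eventually hsmb] with k hk hpk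
  have h2 : (0 : ℝ) < 2 ^ (-(l k * (d - c))) := by positivity
  have hlog := Real.logb_le_logb_of_le one_lt_two (mul_pos h2 (hS k _)) hk.le
  rw [Real.logb_mul h2.ne' (hS k _).ne', Real.logb_rpow two_pos (by norm_num)] at hlog
  linarith

end Competition

section Codebooks

variable {W : Type*}

theorem exists_le_card_fiber [Fintype W] [DecidableEq W] [Nonempty W] {c : W → ℕ} {D : ℕ}
    (hc : ∑ w, c w ≤ D) :
    ∃ θ : Fin D → W, ∀ w, c w ≤ (Finset.univ.filter fun j => θ j = w).card := by
  have hcard : Fintype.card (Σ w, Fin (c w)) ≤ Fintype.card (Fin D) := by simpa using hc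
  obtain ⟨e⟩ := Function.Embedding.nonempty_of_card_le hcard
  refine ⟨Function.extend e Sigma.fst fun _ => Classical.arbitrary W, fun w => ?_⟩
  calc c w = (Finset.univ.map ((Function.Embedding.sigmaMk w).trans e)).card := by simp
    _ ≤ _ := Finset.card_le_card fun j hj => by
      obtain ⟨i, -, rfl⟩ := Finset.mem_map.1 hj
      simpa using e.injective.extend_apply Sigma.fst _ ⟨w, i⟩

theorem exists_codebook [Fintype W] [DecidableEq W] [Nonempty W] {q : W → ℝ} (h0 : ∀ w, 0 ≤ q w)
    (h1 : ∑ w, q w ≤ 1) {D : ℕ} (hD : 0 < D) :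
    ∃ θ : Fin D → W, ∀ w, 1 / (D : ℝ) ≤ q w →
      q w / 2 ≤ (Finset.univ.filter fun j => θ j = w).card / (D : ℝ) := by
  have hD' : (0 : ℝ) < D := by exact_mod_cast hD
  have hsum : ∑ w, ⌊(D : ℝ) * q w⌋₊ ≤ D := by
    have hfloor : ∑ w, (⌊(D : ℝ) * q w⌋₊ : ℝ) ≤ ∑ w, (D : ℝ) * q w :=
      Finset.sum_le_sum fun w _ => Nat.floor_le (mul_nonneg hD'.le (h0 w))
    rw [← Finset.mul_sum] at hfloor
    exact_mod_cast hfloor.trans (mul_le_of_le_one_right hD'.le h1)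
  obtain ⟨θ, hθ⟩ := exists_le_card_fiber hsum
  refine ⟨θ, fun w hw => ?_⟩
  rw [div_le_iff₀ hD', mul_comm] at hw
  have hfloor : (1 : ℝ) ≤ ⌊(D : ℝ) * q w⌋₊ := by
    exact_mod_cast Nat.le_floor (by simpa using hw)
  have hcount : (⌊(D : ℝ) * q w⌋₊ : ℝ) ≤ (Finset.univ.filter fun j => θ j = w).card := by
    exact_mod_cast hθ w
  rw [div_le_div_iff₀ two_pos hD']
  linarith [Nat.lt_floor_add_one ((D : ℝ) * q w)]

variable {D : ℕ}

/-- The equal mixture of a weight `R` and the empirical distribution of a codebook `θ`. -/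
noncomputable def codebookMix [DecidableEq W] (R : W → ℝ) (θ : Fin D → W) (w : W) : ℝ :=
  (R w + (Finset.univ.filter fun j => θ j = w).card / (D : ℝ)) / 2

theorem codebookMix_pos [DecidableEq W] {R : W → ℝ} (hR : ∀ w, 0 < R w) (θ : Fin D → W) (w : W) :
    0 < codebookMix R θ w :=
  half_pos (add_pos_of_pos_of_nonneg (hR w) (by positivity))

theorem sum_codebookMix_le_one [Fintype W] [DecidableEq W] {R : W → ℝ} (hR : ∑ w, R w ≤ 1)
    (θ : Fin D → W) : ∑ w, codebookMix R θ w ≤ 1 := by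
  have hfreq : (∑ w, ((Finset.univ.filter fun j => θ j = w).card : ℝ)) / D ≤ 1 := by
    rw [← Nat.cast_sum, Finset.sum_card_fiberwise_eq_card_filter]
    simpa using div_self_le_one (D : ℝ)
  simp only [codebookMix, ← Finset.sum_div, Finset.sum_add_distrib]
  linarith

/-- A word which is frequent for `q` is coded through the codebook, any other one through `R`. -/
theorem neg_logb_codebookMix_le [DecidableEq W] {R q : W → ℝ} (hR : ∀ w, 0 < R w) (hD : 0 < D)
    {θ : Fin D → W} {w : W} (hq : 0 < q w) (hθ : 1 / (D : ℝ) ≤ q w →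
      q w / 2 ≤ (Finset.univ.filter fun j => θ j = w).card / (D : ℝ)) :
    -Real.logb 2 (codebookMix R θ w) ≤
      -Real.logb 2 (q w) + 2 + max 0 (-Real.logb 2 (R w) - Real.logb 2 D) := by
  have hRw := hR w
  rcases le_or_gt (1 / (D : ℝ)) (q w) with hfreq | hrare
  · have hmix : q w / 2 ^ (2 : ℝ) ≤ codebookMix R θ w := by
      rw [codebookMix, Real.rpow_ofNat]
      linarith [hθ hfreq]
    have hlog := Real.logb_le_logb_of_le one_lt_two (by positivity) hmix
    rw [Real.logb_div hq.ne' (by positivity), Real.logb_rpow two_pos (by norm_num)] at hlog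
    linarith [le_max_left 0 (-Real.logb 2 (R w) - Real.logb 2 D)]
  · have hmix : R w / 2 ≤ codebookMix R θ w :=
      div_le_div_of_nonneg_right (le_add_of_nonneg_right (by positivity)) two_pos.le
    have hlog := Real.logb_le_logb_of_le one_lt_two (half_pos hRw) hmix
    have hqD := Real.logb_le_logb_of_le one_lt_two hq hrare.le
    rw [Real.logb_div hRw.ne' two_ne_zero, Real.logb_self_eq_one one_lt_two] at hlog
    rw [one_div, Real.logb_inv] at hqD
    linarith [le_max_right 0 (-Real.logb 2 (R w) - Real.logb 2 D)]

end Codebooks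

section MixtureCode

variable {α : Type*} {N k D : ℕ}

theorem sum_prod_subword [Fintype α] (Q : (Fin k → α) → ℝ) :
    ∑ v : Fin (N * k) → α, ∏ i : Fin N, Q (fun j => v (finProdFinEquiv (i, j))) =
      (∑ w, Q w) ^ N := by
  classical
  rw [Fintype.sum_pow]
  exact Fintype.sum_equiv ((finProdFinEquiv.symm.arrowCongr (Equiv.refl α)).trans
    (Equiv.curry (Fin N) (Fin k) α)) _ _ fun v => rfl

theorem blk_finProdFinEquiv (i : Fin N) (j : Fin k) (ω : ℤ → α) :
    blk 0 (N * k) ω (finProdFinEquiv (i, j)) = blk (i * k) k ω j := by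
  simp only [blk, finProdFinEquiv_apply_val]
  congr 1
  push_cast
  ring

variable [Fintype α] [DecidableEq α]

/-- The Bayesian mixture, over all codebooks with `D` entries, of the product weights on the
concatenations of `N` words of length `k`. It is a single code as good as the best codebook, up to
the cost of describing a codebook. -/
noncomputable def codeWeight (N : ℕ) (R : (Fin k → α) → ℝ) (D : ℕ) (v : Fin (N * k) → α) : ℝ :=
  (∑ θ : Fin D → Fin k → α, ∏ i : Fin N, codebookMix R θ fun j => v (finProdFinEquiv (i, j))) /
    Fintype.card (Fin D → Fin k → α)

theorem codeWeight_pos [Nonempty α] {R : (Fin k → α) → ℝ} (hR : ∀ w, 0 < R w)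
    (v : Fin (N * k) → α) : 0 < codeWeight N R D v :=
  div_pos (Finset.sum_pos (fun θ _ => Finset.prod_pos fun _ _ => codebookMix_pos hR θ _)
    Finset.univ_nonempty) (Nat.cast_pos.2 Fintype.card_pos)

theorem sum_codeWeight_le_one {R : (Fin k → α) → ℝ} (hR : ∀ w, 0 < R w) (hR1 : ∑ w, R w ≤ 1) :
    ∑ v, codeWeight N R D v ≤ 1 := by
  simp only [codeWeight]
  rw [← Finset.sum_div, Finset.sum_comm]
  simp only [sum_prod_subword]
  refine div_le_one_of_le₀ ?_ (Nat.cast_nonneg _)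
  calc ∑ θ : Fin D → Fin k → α, (∑ w, codebookMix R θ w) ^ N
      ≤ ∑ _θ : Fin D → Fin k → α, (1 : ℝ) := Finset.sum_le_sum fun θ _ => pow_le_one₀
        (Finset.sum_nonneg fun w _ => (codebookMix_pos hR θ w).le) (sum_codebookMix_le_one hR1 θ)
    _ = Fintype.card (Fin D → Fin k → α) := by simp

theorem neg_logb_codeWeight_blk_le [Nonempty α] {R : (Fin k → α) → ℝ} (hR : ∀ w, 0 < R w)
    (θ : Fin D → Fin k → α) (ω : ℤ → α) :
    -Real.logb 2 (codeWeight N R D (blk 0 (N * k) ω)) ≤ D * k * Real.logb 2 (Fintype.card α) +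
      ∑ i ∈ Finset.range N, -Real.logb 2 (codebookMix R θ (blk (i * k) k ω)) := by
  have hprod : ∀ θ : Fin D → Fin k → α,
      0 < ∏ i ∈ Finset.range N, codebookMix R θ (blk (i * k) k ω) :=
    fun θ => Finset.prod_pos fun _ _ => codebookMix_pos hR θ _
  have hcard : (0 : ℝ) < Fintype.card (Fin D → Fin k → α) := Nat.cast_pos.2 Fintype.card_pos
  have hrange : ∀ θ : Fin D → Fin k → α, ∏ i : Fin N, codebookMix R θ (blk (i * k) k ω) =
      ∏ i ∈ Finset.range N, codebookMix R θ (blk (i * k) k ω) :=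
    fun θ => Fin.prod_univ_eq_prod_range (fun i => codebookMix R θ (blk (i * k) k ω)) N
  have hle : (∏ i ∈ Finset.range N, codebookMix R θ (blk (i * k) k ω)) /
      Fintype.card (Fin D → Fin k → α) ≤ codeWeight N R D (blk 0 (N * k) ω) := by
    simp only [codeWeight, blk_finProdFinEquiv, hrange]
    exact div_le_div_of_nonneg_right
      (Finset.single_le_sum (fun θ _ => (hprod θ).le) (Finset.mem_univ θ)) hcard.le
  have hlog := Real.logb_le_logb_of_le one_lt_two (div_pos (hprod θ) hcard) hle
  rw [Real.logb_div (hprod θ).ne' hcard.ne',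
    Real.logb_prod _ _ fun i _ => (codebookMix_pos hR θ _).ne'] at hlog
  have hcount : Real.logb 2 (Fintype.card (Fin D → Fin k → α)) =
      D * k * Real.logb 2 (Fintype.card α) := by
    simp [Real.logb_pow, mul_assoc]
  rw [hcount] at hlog
  rw [Finset.sum_neg_distrib]
  linarith

end MixtureCode

section EmpiricalDistribution

variable {α : Type*} [DecidableEq α] {k n : ℕ}

theorem empDist_nonneg (ω : ℤ → α) (w : Fin k → α) : 0 ≤ empDist k n ω w :=
  div_nonneg (Finset.sum_nonneg fun _ _ => ite_nonneg zero_le_one le_rfl) (Nat.cast_nonneg _)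

variable [Fintype α]

theorem sum_range_blk (hn : 0 < n / k) (ω : ℤ → α) (F : (Fin k → α) → ℝ) :
    ∑ i ∈ Finset.range (n / k), F (blk (i * k) k ω) =
      (n / k : ℕ) * ∑ w, empDist k n ω w * F w := by
  have hn' : ((n / k : ℕ) : ℝ) ≠ 0 := by exact_mod_cast hn.ne'
  simp only [empDist, div_mul_eq_mul_div]
  rw [← Finset.sum_div, mul_div_cancel₀ _ hn']
  simp only [Finset.sum_mul]
  rw [Finset.sum_comm]
  simp

theorem sum_empDist (hn : 0 < n / k) (ω : ℤ → α) : ∑ w, empDist k n ω w = 1 := by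
  have hn' : ((n / k : ℕ) : ℝ) ≠ 0 := by exact_mod_cast hn.ne'
  have hsum := sum_range_blk hn ω fun _ => 1
  simp only [Finset.sum_const, Finset.card_range, nsmul_eq_mul, mul_one] at hsum
  exact (mul_eq_left₀ hn').1 hsum.symm

theorem exists_sum_neg_logb_codebookMix_le [Nonempty α] (hn : 0 < n / k) (ω : ℤ → α)
    {R : (Fin k → α) → ℝ} (hR : ∀ w, 0 < R w) {D : ℕ} (hD : 0 < D) :
    ∃ θ : Fin D → Fin k → α,
      ∑ i ∈ Finset.range (n / k), -Real.logb 2 (codebookMix R θ (blk (i * k) k ω)) ≤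
        (n / k : ℕ) * (plugIn k n ω + 2) + ∑ i ∈ Finset.range (n / k),
          max 0 (-Real.logb 2 (R (blk (i * k) k ω)) - Real.logb 2 D) := by
  obtain ⟨θ, hθ⟩ := exists_codebook (empDist_nonneg ω) (sum_empDist hn ω).le hD
  refine ⟨θ, ?_⟩
  have hplugIn : plugIn k n ω + 2 =
      ∑ w, empDist k n ω w * (-Real.logb 2 (empDist k n ω w) + 2) := by
    simp only [mul_add, Finset.sum_add_distrib, ← Finset.sum_mul, sum_empDist hn, plugIn, Hent,
      mul_neg, Finset.sum_neg_distrib, one_mul]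
  rw [sum_range_blk hn ω fun w => -Real.logb 2 (codebookMix R θ w),
    sum_range_blk hn ω fun w => max 0 (-Real.logb 2 (R w) - Real.logb 2 D), hplugIn, ← mul_add,
    ← Finset.sum_add_distrib]
  gcongr with w
  rw [← mul_add]
  rcases (empDist_nonneg ω w).eq_or_lt with hw | hw
  · rw [← hw, zero_mul, zero_mul]
  · gcongr
    exact neg_logb_codebookMix_le hR hD hw (hθ w)

theorem neg_logb_codeWeight_le [Nonempty α] (hn : 0 < n / k) (ω : ℤ → α)
    {R : (Fin k → α) → ℝ} (hR : ∀ w, 0 < R w) {D : ℕ} (hD : 0 < D) :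
    -Real.logb 2 (codeWeight (n / k) R D (blk 0 (n / k * k) ω)) ≤
      D * k * Real.logb 2 (Fintype.card α) + (n / k : ℕ) * (plugIn k n ω + 2) +
        ∑ i ∈ Finset.range (n / k),
          max 0 (-Real.logb 2 (R (blk (i * k) k ω)) - Real.logb 2 D) := by
  obtain ⟨θ, hθ⟩ := exists_sum_neg_logb_codebookMix_le hn ω hR hD
  linarith [neg_logb_codeWeight_blk_le (N := n / k) hR θ ω]

end EmpiricalDistribution

section EntropyFunctional

variable {A : Type*} [Fintype A]

theorem Hent_eq_sum_negMulLog (p : A → ℝ) :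
    Hent p = ∑ w, Real.negMulLog (p w) / Real.log 2 := by
  rw [Hent, ← Finset.sum_neg_distrib]
  refine Finset.sum_congr rfl fun w _ => ?_
  rw [Real.negMulLog, Real.logb]
  ring

theorem Hent_nonneg {p : A → ℝ} (h0 : ∀ w, 0 ≤ p w) (h1 : ∀ w, p w ≤ 1) : 0 ≤ Hent p := by
  rw [Hent_eq_sum_negMulLog]
  exact Finset.sum_nonneg fun w _ =>
    div_nonneg (Real.negMulLog_nonneg (h0 w) (h1 w)) (Real.log_nonneg one_le_two)

variable {Ω : Type*} [MeasurableSpace Ω] {P : Measure Ω}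

theorem integrable_negMulLog_comp [IsFiniteMeasure P] {f : Ω → ℝ} (hf : Measurable f)
    (h0 : ∀ x, 0 ≤ f x) (h1 : ∀ x, f x ≤ 1) : Integrable (fun x => Real.negMulLog (f x)) P :=
  integrable_of_measurable_of_nonneg_of_le (Real.continuous_negMulLog.measurable.comp hf)
    (fun x => Real.negMulLog_nonneg (h0 x) (h1 x))
    fun x => (Real.negMulLog_le_one_sub_self (h0 x)).trans (sub_le_self 1 (h0 x))

variable {p : Ω → A → ℝ}

theorem integrable_Hent [IsFiniteMeasure P] (hp : ∀ w, Measurable fun x => p x w)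
    (h0 : ∀ x w, 0 ≤ p x w) (h1 : ∀ x w, p x w ≤ 1) : Integrable (fun x => Hent (p x)) P := by
  simp only [Hent_eq_sum_negMulLog]
  exact integrable_finsetSum _ fun w _ =>
    (integrable_negMulLog_comp (hp w) (fun x => h0 x w) fun x => h1 x w).div_const _

theorem integral_Hent_le [IsProbabilityMeasure P] (hp : ∀ w, Measurable fun x => p x w)
    (h0 : ∀ x w, 0 ≤ p x w) (h1 : ∀ x w, p x w ≤ 1) :
    ∫ x, Hent (p x) ∂P ≤ Hent fun w => ∫ x, p x w ∂P := by
  have hinteg : ∀ w, Integrable (fun x => Real.negMulLog (p x w)) P := fun w =>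
    integrable_negMulLog_comp (hp w) (fun x => h0 x w) fun x => h1 x w
  simp only [Hent_eq_sum_negMulLog]
  rw [integral_finsetSum _ fun w _ => (hinteg w).div_const _]
  refine Finset.sum_le_sum fun w _ => ?_
  rw [integral_div]
  refine div_le_div_of_nonneg_right ?_ (Real.log_nonneg one_le_two)
  exact Real.concaveOn_negMulLog.le_map_integral Real.continuous_negMulLog.continuousOn isClosed_Ici
    (ae_of_all _ fun x => h0 x w)
    (integrable_of_measurable_of_nonneg_of_le (hp w) (fun x => h0 x w) fun x => h1 x w) (hinteg w)

end EntropyFunctional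

section UpperBound

variable {α : Type*} {k n : ℕ}

theorem Hblock_nonneg [Fintype α] [MeasurableSpace α] (μ : Measure (ℤ → α))
    [IsProbabilityMeasure μ] (k : ℕ) : 0 ≤ Hblock μ k :=
  Hent_nonneg (pblock_nonneg μ k) (pblock_le_one μ k)

theorem entropyRate_nonneg [Fintype α] [MeasurableSpace α] {μ : Measure (ℤ → α)}
    [IsProbabilityMeasure μ] {h : ℝ} (hH : Tendsto (fun k => Hblock μ k / k) atTop (nhds h)) :
    0 ≤ h :=
  ge_of_tendsto' hH fun k => div_nonneg (Hblock_nonneg μ k) (Nat.cast_nonneg k)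

variable [DecidableEq α]

theorem empDist_le_one (ω : ℤ → α) (w : Fin k → α) : empDist k n ω w ≤ 1 := by
  refine div_le_one_of_le₀ ?_ (Nat.cast_nonneg _)
  exact (Finset.sum_le_card_nsmul _ _ 1 fun i _ => by split_ifs <;> simp).trans (by simp)

theorem plugIn_nonneg [Fintype α] (k n : ℕ) (ω : ℤ → α) : 0 ≤ plugIn k n ω :=
  Hent_nonneg (empDist_nonneg ω) (empDist_le_one ω)

variable [MeasurableSpace α] [MeasurableSingletonClass α] {μ : Measure (ℤ → α)}

theorem measurable_empDist (w : Fin k → α) :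
    Measurable fun ω : ℤ → α => empDist k n ω w :=
  (Finset.measurable_sum _ fun i _ => Measurable.ite
    (measurable_window (i * k : ℕ) k (measurableSet_singleton w))
    measurable_const measurable_const).div_const _

theorem integrable_plugIn [Fintype α] [IsFiniteMeasure μ] (k n : ℕ) :
    Integrable (fun ω => plugIn k n ω) μ :=
  integrable_Hent measurable_empDist empDist_nonneg empDist_le_one

theorem integral_empDist [Finite α] [IsFiniteMeasure μ]
    (hμ : MeasurePreserving shift μ μ) (hn : 0 < n / k) (w : Fin k → α) :
    ∫ ω, empDist k n ω w ∂μ = pblock μ k w := by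
  have hn' : ((n / k : ℕ) : ℝ) ≠ 0 := by exact_mod_cast hn.ne'
  cases nonempty_fintype α
  have hblk : ∀ i : ℕ, ∫ ω, (if blk (i * k) k ω = w then (1 : ℝ) else 0) ∂μ = pblock μ k w :=
    fun i => (integral_window hμ (i * k : ℕ) k fun v => if v = w then 1 else 0).trans (by simp)
  have hinteg : ∀ i : ℕ, Integrable (fun ω => if blk (i * k) k ω = w then (1 : ℝ) else 0) μ :=
    fun i => integrable_window (i * k : ℕ) k fun v => if v = w then 1 else 0
  simp only [empDist]
  rw [integral_div, integral_finsetSum _ fun i _ => hinteg i]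
  simp only [hblk, Finset.sum_const, Finset.card_range, nsmul_eq_mul]
  exact mul_div_cancel_left₀ _ hn'

theorem integral_plugIn_le_Hblock [Fintype α] [IsProbabilityMeasure μ]
    (hμ : MeasurePreserving shift μ μ) (hn : 0 < n / k) : ∫ ω, plugIn k n ω ∂μ ≤ Hblock μ k := by
  have hjensen := integral_Hent_le (P := μ) measurable_empDist
    (empDist_nonneg (k := k) (n := n)) empDist_le_one
  simp only [integral_empDist hμ hn] at hjensen
  exact hjensen

end UpperBound

section Fatou

variable {Ω : Type*} [MeasurableSpace Ω] {P : Measure Ω} {u : ℕ → Ω → ℝ} {h : ℝ}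

theorem liminf_eq_of_forall_lt {v : ℕ → ℝ} (hlow : ∀ c < h, ∀ᶠ k in atTop, c ≤ v k)
    (hup : ∀ c > h, ∃ᶠ k in atTop, v k ≤ c) : liminf v atTop = h := by
  have hbdd : IsBoundedUnder (· ≥ ·) atTop v := ⟨h - 1, hlow (h - 1) (sub_one_lt h)⟩
  have hcobdd : IsCoboundedUnder (· ≥ ·) atTop v :=
    .of_frequently_le (hup (h + 1) (lt_add_one h))
  exact le_antisymm
    (le_of_forall_gt_imp_ge_of_dense fun c hc => liminf_le_of_frequently_le (hup c hc) hbdd)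
    (le_of_forall_lt_imp_le_of_dense fun c hc => le_liminf_of_le hcobdd (hlow c hc))

theorem ofReal_le_liminf_ofReal {v : ℕ → ℝ} (hlow : ∀ c < h, ∀ᶠ k in atTop, c ≤ v k) :
    ENNReal.ofReal h ≤ liminf (fun k => ENNReal.ofReal (v k)) atTop := by
  refine le_of_forall_lt_imp_le_of_dense fun c hc => le_liminf_of_le (by isBoundedDefault) ?_
  filter_upwards [hlow c.toReal ((ENNReal.lt_ofReal_iff_toReal_lt hc.ne_top).1 hc)] with k hk
  rw [← ENNReal.ofReal_toReal hc.ne_top]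
  exact ENNReal.ofReal_le_ofReal hk

theorem ae_liminf_eq_of_integral_le [IsProbabilityMeasure P] (hu : ∀ k, Integrable (u k) P)
    (hu0 : ∀ k x, 0 ≤ u k x) {b : ℕ → ℝ} (hb : Tendsto b atTop (nhds h))
    (hub : ∀ᶠ k in atTop, ∫ x, u k x ∂P ≤ b k)
    (hlow : ∀ᵐ x ∂P, ∀ c < h, ∀ᶠ k in atTop, c ≤ u k x) :
    ∀ᵐ x ∂P, liminf (fun k => u k x) atTop = h := by
  have hh : 0 ≤ h := ge_of_tendsto hb (hub.mono fun k hk => (integral_nonneg (hu0 k)).trans hk)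
  have hmeas : ∀ k, AEMeasurable (fun x => ENNReal.ofReal (u k x)) P :=
    fun k => (hu k).aemeasurable.ennreal_ofReal
  have hmeas' : AEMeasurable (fun x => liminf (fun k => ENNReal.ofReal (u k x)) atTop) P := by
    simp only [liminf_eq_iSup_iInf_of_nat']
    exact .iSup fun n => .iInf fun i => hmeas (i + n)
  have hfatou : ∫⁻ x, liminf (fun k => ENNReal.ofReal (u k x)) atTop ∂P ≤ ENNReal.ofReal h := by
    refine (lintegral_liminf_le' hmeas).trans ?_
    rw [← (ENNReal.tendsto_ofReal hb).liminf_eq]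
    refine liminf_le_liminf (hub.mono fun k hk => ?_)
    rw [← ofReal_integral_eq_lintegral_ofReal (hu k) (ae_of_all _ (hu0 k))]
    exact ENNReal.ofReal_le_ofReal hk
  have heq := ae_eq_of_ae_le_of_lintegral_le (f := fun _ => ENNReal.ofReal h)
    (hlow.mono fun x hx => ofReal_le_liminf_ofReal hx) (by simp) hmeas' (by simpa)
  filter_upwards [hlow, heq] with x hx hxeq
  refine liminf_eq_of_forall_lt hx fun c hc => ?_
  have hlt : liminf (fun k => ENNReal.ofReal (u k x)) atTop < ENNReal.ofReal c := by
    rw [← hxeq]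
    exact (ENNReal.ofReal_lt_ofReal_iff (hh.trans_lt hc)).2 hc
  exact (frequently_lt_of_liminf_lt (by isBoundedDefault) hlt).mono fun k hk =>
    ((ENNReal.ofReal_lt_ofReal_iff (hh.trans_lt hc)).1 hk).le

end Fatou

section LowerBound

theorem eventually_mul_two_rpow_le_div {a b : ℝ} (ha : 0 ≤ a) (hab : a < b) {n : ℕ → ℕ}
    (hn : ∀ k : ℕ, (2 : ℝ) ^ (k * b) ≤ n k) (C : ℝ) :
    ∀ᶠ k : ℕ in atTop, C * 2 ^ (k * a) ≤ ((n k / k : ℕ) : ℝ) := by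
  have hlim := (tendsto_pow_const_div_const_pow_of_one_lt 1
    (Real.one_lt_rpow one_lt_two (sub_pos.2 hab))).const_mul (C + 1)
  rw [mul_zero] at hlim
  filter_upwards [hlim.eventually_lt_const one_pos, eventually_gt_atTop 0] with k hk hk0
  have hk0' : (0 : ℝ) < k := by exact_mod_cast hk0
  rw [pow_one, ← Real.rpow_mul_natCast two_pos.le, ← mul_div_assoc,
    div_lt_one (by positivity)] at hk
  have hone : (1 : ℝ) ≤ 2 ^ (k * a) := Real.one_le_rpow one_le_two (by positivity)
  have hfloor : (n k : ℝ) < k * ((n k / k : ℕ) + 1) := by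
    exact_mod_cast Nat.lt_mul_div_succ (n k) hk0
  have hmul : k * (2 ^ (k * a) * (C + 1)) ≤ k * (((n k / k : ℕ) : ℝ) + 1) :=
    calc k * (2 ^ (k * a) * (C + 1)) = 2 ^ (k * a) * ((C + 1) * k) := by ring
      _ ≤ 2 ^ (k * a) * 2 ^ ((b - a) * k) := by gcongr
      _ = 2 ^ (k * b) := by rw [← Real.rpow_add two_pos]; ring_nf
      _ ≤ k * ((n k / k : ℕ) + 1) := (hn k).trans hfloor.le
  linarith [le_of_mul_le_mul_left hmul hk0']

theorem eventually_div_pos {b : ℝ} (hb : 0 < b) {n : ℕ → ℕ}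
    (hn : ∀ k : ℕ, (2 : ℝ) ^ (k * b) ≤ n k) : ∀ᶠ k in atTop, 0 < n k / k := by
  filter_upwards [eventually_mul_two_rpow_le_div le_rfl hb hn 1] with k hk
  exact_mod_cast (by positivity : (0 : ℝ) < 1 * 2 ^ (k * (0 : ℝ))).trans_le hk

variable {α : Type*} [Fintype α] [Nonempty α] [DecidableEq α]

theorem le_plugIn_div {k n : ℕ} (hk : 0 < k) (hn : 0 < n / k) {ω : ℤ → α}
    {R : (Fin k → α) → ℝ} (hR : ∀ w, 0 < R w) {D : ℕ} (hD : 0 < D) {a c δ : ℝ}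
    (hcode : (n / k * k : ℕ) * (c + 3 * δ) ≤
      -Real.logb 2 (codeWeight (n / k) R D (blk 0 (n / k * k) ω)))
    (hexcess : ∑ i ∈ Finset.range (n / k), max 0 (-Real.logb 2 (R (blk (i * k) k ω)) - k * a) ≤
      (n / k * k : ℕ) * δ)
    (haD : k * a ≤ Real.logb 2 D) (hDn : D * Real.logb 2 (Fintype.card α) ≤ (n / k : ℕ) * δ)
    (hkδ : 2 ≤ k * δ) : c ≤ plugIn k n ω / k := by
  have hk' : (0 : ℝ) < k := by exact_mod_cast hk
  have hn' : (0 : ℝ) < (n / k : ℕ) := by exact_mod_cast hn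
  have hexcess' : ∑ i ∈ Finset.range (n / k),
      max 0 (-Real.logb 2 (R (blk (i * k) k ω)) - Real.logb 2 D) ≤ (n / k * k : ℕ) * δ :=
    hexcess.trans' (by gcongr)
  have hbound := hcode.trans (neg_logb_codeWeight_le hn ω hR hD)
  rw [Nat.cast_mul] at hbound hexcess'
  have hDk := mul_le_mul_of_nonneg_right hDn hk'.le
  have hNk := mul_le_mul_of_nonneg_left hkδ hn'.le
  rw [le_div_iff₀ hk']
  refine le_of_mul_le_mul_left ?_ hn'
  linarith

variable [MeasurableSpace α] [MeasurableSingletonClass α]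
  {μ : Measure (ℤ → α)} [IsProbabilityMeasure μ]

theorem ae_eventually_le_plugIn_div (hμ : Ergodic shift μ) {h : ℝ}
    (hH : Tendsto (fun k => Hblock μ k / k) atTop (nhds h)) {b c : ℝ} (hb : h < b) (hc : c < h)
    {n : ℕ → ℕ} (hn : ∀ k : ℕ, (2 : ℝ) ^ (k * b) ≤ n k) :
    ∀ᵐ ω ∂μ, ∀ᶠ k in atTop, c ≤ plugIn k (n k) ω / k := by
  have hh := entropyRate_nonneg hH
  obtain ⟨a, ha, hab⟩ := exists_between hb
  obtain ⟨δ, hδ, hcδ⟩ : ∃ δ > 0, c + 3 * δ < h := ⟨(h - c) / 4, by linarith, by linarith⟩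
  let D : ℕ → ℕ := fun k => ⌈(2 : ℝ) ^ (k * a)⌉₊
  have hgrowth := eventually_mul_two_rpow_le_div (hh.trans ha.le) hab hn
  have hpos := eventually_div_pos (hh.trans_lt hb) hn
  have hDn : ∀ᶠ k in atTop, D k * Real.logb 2 (Fintype.card α) ≤ (n k / k : ℕ) * δ := by
    have hcard : 0 ≤ Real.logb 2 (Fintype.card α) :=
      Real.logb_nonneg one_lt_two (Nat.one_le_cast.2 Fintype.card_pos)
    filter_upwards [hgrowth (2 * Real.logb 2 (Fintype.card α) / δ)] with k hk
    have hone : (1 : ℝ) ≤ 2 ^ (k * a) :=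
      Real.one_le_rpow one_le_two (mul_nonneg (Nat.cast_nonneg k) (hh.trans ha.le))
    have hceil : (D k : ℝ) ≤ 2 * 2 ^ (k * a) := Nat.ceil_le_two_mul (by linarith)
    calc D k * Real.logb 2 (Fintype.card α)
        ≤ 2 * 2 ^ (k * a) * Real.logb 2 (Fintype.card α) := by gcongr
      _ = 2 * Real.logb 2 (Fintype.card α) / δ * 2 ^ (k * a) * δ := by field_simp
      _ ≤ (n k / k : ℕ) * δ := by gcongr
  obtain ⟨R, hR, hR1, hexcess⟩ := exists_weight_ae_eventually_forall_sum_excess_le hμ hH ha hδ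
  have hcode := ae_eventually_le_neg_logb_weight hμ hH hcδ (l := fun k => n k / k * k)
    (hpos.mono fun k hk => Nat.le_mul_of_pos_left k hk)
    (fun k v => codeWeight_pos (D := D k) (hR k) v) fun k => sum_codeWeight_le_one (hR k) (hR1 k)
  filter_upwards [hexcess, hcode] with ω hω hωcode
  filter_upwards [hω, hωcode, hpos, hDn, eventually_le_natCast_mul 2 hδ, eventually_gt_atTop 0]
    with k hk hkcode hkn hkD hkδ hk0
  have h2 : (0 : ℝ) < 2 ^ (k * a) := by positivity
  refine le_plugIn_div hk0 hkn (hR k) (Nat.ceil_pos.2 h2) hkcode (hk _ hkn) ?_ hkD hkδ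
  rw [Real.le_logb_iff_rpow_le one_lt_two (Nat.cast_pos.2 (Nat.ceil_pos.2 h2))]
  exact Nat.le_ceil _

theorem ae_forall_lt_eventually_le_plugIn_div (hμ : Ergodic shift μ) {h : ℝ}
    (hH : Tendsto (fun k => Hblock μ k / k) atTop (nhds h)) {b : ℝ} (hb : h < b)
    {n : ℕ → ℕ} (hn : ∀ k : ℕ, (2 : ℝ) ^ (k * b) ≤ n k) :
    ∀ᵐ ω ∂μ, ∀ c < h, ∀ᶠ k in atTop, c ≤ plugIn k (n k) ω / k := by
  have hrat : ∀ᵐ ω ∂μ, ∀ q : ℚ, (q : ℝ) < h → ∀ᶠ k in atTop, q ≤ plugIn k (n k) ω / k :=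
    ae_all_iff.2 fun q => eventually_imp_distrib_left.2 fun hq =>
      ae_eventually_le_plugIn_div hμ hH hb hq hn
  filter_upwards [hrat] with ω hω c hc
  obtain ⟨q, hcq, hqh⟩ := exists_rat_btwn hc
  exact (hω q hqh).mono fun k hk => hcq.le.trans hk

end LowerBound

/-- Theorem 1, almost-sure liminf form: for a stationary ergodic process with
entropy rate `h`, any `ε > 0` and sample sizes `n(k) ≥ 2^{k(h+ε)}`, almost
surely `liminf_{k→∞} H(k, X_1^{n(k)})/k = h`. -/
theorem plugIn_rate_liminf_eq_ae
    {μ : Measure (ℤ → 𝕏)} [IsProbabilityMeasure μ]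
    (herg : Ergodic shift μ) (h : ℝ)
    (hrate : Tendsto (fun k => Hblock μ k / k) atTop (nhds h))
    (ε : ℝ) (hε : 0 < ε) (n : ℕ → ℕ)
    (hn : ∀ k : ℕ, (2 : ℝ) ^ ((k : ℝ) * (h + ε)) ≤ (n k : ℝ)) :
    ∀ᵐ ω ∂μ, Filter.liminf (fun k => plugIn k (n k) ω / k) atTop = h := by
  have hmp := herg.toMeasurePreserving
  have hb : h < h + ε := lt_add_of_pos_right h hε
  refine ae_liminf_eq_of_integral_le (fun k => (integrable_plugIn k (n k)).div_const _)
    (fun k ω => div_nonneg (plugIn_nonneg k (n k) ω) (Nat.cast_nonneg k)) hrate ?_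
    (ae_forall_lt_eventually_le_plugIn_div herg hrate hb hn)
  filter_upwards [eventually_div_pos ((entropyRate_nonneg hrate).trans_lt hb) hn] with k hk
  rw [integral_div]
  exact div_le_div_of_nonneg_right (integral_plugIn_le_Hblock hmp hk) (Nat.cast_nonneg k)
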